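/- Let 0 < α < 1, (1−α)/2 < β < (1+α)/2, T > 0, b, σ : [0,∞) × ℝ → ℝ with b globally Lipschitz and σ ∈ C¹ with σ, σ'_t, σ'_x globally Lipschitz, and Z a real random variable. Then, with probability 1, the pathwise SDE X(t) = Z + ∫₀ᵗ b(τ, X(τ)) dτ + ∫₀ᵗ σ(τ, X(τ)) dξ_α(τ) (integrals understood pathwise as Young–Stieltjes integrals against the fBm path) has a unique solution in C^β([0,T]). -/

import Mathlib

open MeasureTheory ProbabilityTheory Set Finset intervalIntegral

/-- Left-endpoint Riemann–Stieltjes sum. -/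
noncomputable def RSsum (f g : ℝ → ℝ) (n : ℕ) (t : Fin (n + 1) → ℝ) : ℝ :=
  ∑ i : Fin n, f (t i.castSucc) * (g (t i.succ) - g (t i.castSucc))

/-- `I` is the (Young–)Riemann–Stieltjes integral `∫_a^b f dg`. -/
def IsRSIntegral (f g : ℝ → ℝ) (a b I : ℝ) : Prop :=
  ∀ ε > 0, ∃ δ > 0, ∀ (n : ℕ) (t : Fin (n + 1) → ℝ),
    Monotone t → t 0 = a → t (Fin.last n) = b →
    (∀ i : Fin n, t i.succ - t i.castSucc < δ) →
    |RSsum f g n t - I| < ε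

/-- Fractional Brownian motion with exponent `α` and constant `C`. -/
def IsFBM {Ω : Type*} [MeasurableSpace Ω] (P : Measure Ω)
    (ξ : ℝ → Ω → ℝ) (α C : ℝ) : Prop :=
  (∀ t : ℝ, Measurable (ξ t)) ∧
  ∀ (n : ℕ) (t : Fin n → ℝ), (∀ i, 0 ≤ t i) → ∀ c : Fin n → ℝ,
    Measure.map (fun ω => ∑ i, c i * ξ (t i) ω) P =
      gaussianReal 0
        (∑ i, ∑ j, c i * c j *
          (C * ((t i) ^ (1 + α) + (t j) ^ (1 + α) - |t i - t j| ^ (1 + α)))).toNNReal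

/-- `x` is a pathwise solution (for the sample point `ω`) of the SDE
`X(t) = Z + ∫₀ᵗ b(τ,X(τ)) dτ + ∫₀ᵗ σ(τ,X(τ)) dξ_α(τ)` in `C^β([0,T])`. -/
def IsPathwiseSolution {Ω : Type*} (b σ : ℝ → ℝ → ℝ) (ξ : ℝ → Ω → ℝ)
    (Z : Ω → ℝ) (T β : ℝ) (ω : Ω) (x : ℝ → ℝ) : Prop :=
  (∃ Cx : ℝ, ∀ t₁ ∈ Icc (0 : ℝ) T, ∀ t₂ ∈ Icc (0 : ℝ) T,
      |x t₂ - x t₁| ≤ Cx * |t₂ - t₁| ^ β) ∧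
  ∀ t ∈ Icc (0 : ℝ) T, ∃ I : ℝ,
    IsRSIntegral (fun τ => σ τ (x τ)) (fun τ => ξ τ ω) 0 t I ∧
    x t = Z ω + (∫ τ in (0 : ℝ)..t, b τ (x τ)) + I


/-- Dyadic chaining: a continuous function with geometrically small dyadic increments is Hölder. -/
lemma holder_of_dyadic (g : ℝ → ℝ) (hg : Continuous g) (γ A : ℝ) (hγ : 0 < γ)
    (hd : ∀ n k : ℕ, k < 2 ^ n →
      |g (((k : ℝ) + 1) / 2 ^ n) - g ((k : ℝ) / 2 ^ n)| ≤ A * ((2 : ℝ) ^ (-γ)) ^ n) :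
    ∃ L : ℝ, 0 ≤ L ∧ ∀ s ∈ Icc (0 : ℝ) 1, ∀ t ∈ Icc (0 : ℝ) 1,
      |g t - g s| ≤ L * |t - s| ^ γ := by
  set r : ℝ := (2 : ℝ) ^ (-γ) with hr
  have hr0 : 0 < r := by positivity
  have hr1 : r < 1 := Real.rpow_lt_one_of_one_lt_of_neg (by norm_num) (by linarith)
  have hA : 0 ≤ A := by
    have := hd 0 0 (by norm_num)
    simp only [pow_zero, mul_one] at this
    exact (abs_nonneg _).trans this
  let d : ℕ → ℝ → ℝ := fun n s => (⌊s * 2 ^ n⌋₊ : ℝ) / 2 ^ n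
  have hstep : ∀ s ∈ Icc (0 : ℝ) 1, ∀ n, dist (g (d n s)) (g (d (n + 1) s)) ≤ A * r ^ n := by
    intro s hs n
    rw [dist_comm, Real.dist_eq]
    have hy0 : 0 ≤ s * 2 ^ n := mul_nonneg hs.1 (by positivity)
    have h1 := Nat.floor_le hy0
    have h2 := Nat.lt_floor_add_one (s * 2 ^ n)
    have hz0 : 0 ≤ s * 2 ^ (n + 1) := mul_nonneg hs.1 (by positivity)
    have h3 := Nat.floor_le hz0
    have h4 := Nat.lt_floor_add_one (s * 2 ^ (n + 1))
    have e : s * 2 ^ (n + 1) = 2 * (s * 2 ^ n) := by ring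
    have hcase : ⌊s * 2 ^ (n + 1)⌋₊ = 2 * ⌊s * 2 ^ n⌋₊ ∨
        ⌊s * 2 ^ (n + 1)⌋₊ = 2 * ⌊s * 2 ^ n⌋₊ + 1 := by
      have a1 : 2 * ⌊s * 2 ^ n⌋₊ ≤ ⌊s * 2 ^ (n + 1)⌋₊ := by
        apply Nat.le_floor; push_cast; rw [e]; linarith
      have a2 : ⌊s * 2 ^ (n + 1)⌋₊ < 2 * ⌊s * 2 ^ n⌋₊ + 2 := by
        rw [Nat.floor_lt hz0]; push_cast; rw [e]; linarith
      omega
    have hq : ((2 * ⌊s * 2 ^ n⌋₊ : ℕ) : ℝ) / 2 ^ (n + 1) = d n s := by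
      simp only [d]; push_cast; rw [pow_succ]; field_simp
    have hle : A * r ^ (n + 1) ≤ A * r ^ n := by
      apply mul_le_mul_of_nonneg_left _ hA
      exact pow_le_pow_of_le_one hr0.le hr1.le (Nat.le_succ n)
    rcases hcase with hc | hc
    · have : d (n + 1) s = d n s := by rw [← hq]; simp only [d]; rw [hc]
      rw [this]; simp; positivity
    · have hlt : 2 * ⌊s * 2 ^ n⌋₊ < 2 ^ (n + 1) := by
        have : ⌊s * 2 ^ (n + 1)⌋₊ ≤ 2 ^ (n + 1) := by
          apply Nat.floor_le_of_le; push_cast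
          have := hs.2
          have h5 : (0 : ℝ) < 2 ^ (n + 1) := by positivity
          nlinarith
        omega
      have := hd (n + 1) _ hlt
      rw [hq] at this
      have e2 : (((2 * ⌊s * 2 ^ n⌋₊ : ℕ) : ℝ) + 1) / 2 ^ (n + 1) = d (n + 1) s := by
        simp only [d]; rw [hc]; push_cast; rfl
      rw [e2] at this
      exact this.trans hle
  have hdn : ∀ s ∈ Icc (0 : ℝ) 1, Filter.Tendsto (fun n => d n s) Filter.atTop (nhds s) := by
    intro s hs
    have hpow : Filter.Tendsto (fun n : ℕ => ((1 : ℝ) / 2) ^ n) Filter.atTop (nhds 0) :=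
      tendsto_pow_atTop_nhds_zero_of_lt_one (by norm_num) (by norm_num)
    have hlow : Filter.Tendsto (fun n : ℕ => s - ((1 : ℝ) / 2) ^ n) Filter.atTop (nhds s) := by
      simpa using tendsto_const_nhds.sub hpow
    refine tendsto_of_tendsto_of_tendsto_of_le_of_le hlow tendsto_const_nhds ?_ ?_
    · intro n
      have h2 := Nat.lt_floor_add_one (s * 2 ^ n)
      simp only [d]
      rw [le_div_iff₀ (by positivity), sub_mul, one_div, inv_pow,
        inv_mul_cancel₀ (by positivity)]
      linarith
    · intro n
      simp only [d]
      rw [div_le_iff₀ (by positivity)]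
      exact Nat.floor_le (mul_nonneg hs.1 (by positivity))
  have hfar : ∀ s ∈ Icc (0 : ℝ) 1, ∀ n, |g (d n s) - g s| ≤ A * r ^ n / (1 - r) := by
    intro s hs n
    rw [← Real.dist_eq]
    exact dist_le_of_le_geometric_of_tendsto r A hr1 (hstep s hs)
      ((hg.tendsto s).comp (hdn s hs)) n
  set L := (2 * A / (1 - r) + A) * r⁻¹ with hL
  have h1r : 0 < 1 - r := by linarith
  have hL0 : 0 ≤ L := by positivity
  have main : ∀ s ∈ Icc (0 : ℝ) 1, ∀ t ∈ Icc (0 : ℝ) 1, s < t →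
      |g t - g s| ≤ L * (t - s) ^ γ := by
    intro s hs t ht hst
    obtain ⟨n, hn1, hn2⟩ := exists_nat_pow_near_of_lt_one (x := t - s) (y := (1 / 2 : ℝ))
      (by linarith) (by linarith [hs.1, ht.2]) (by norm_num) (by norm_num)
    have hadj : |g (d n t) - g (d n s)| ≤ A * r ^ n := by
      have hy0 : 0 ≤ s * 2 ^ n := mul_nonneg hs.1 (by positivity)
      have hy1 : 0 ≤ t * 2 ^ n := mul_nonneg ht.1 (by positivity)
      have a1 : ⌊s * 2 ^ n⌋₊ ≤ ⌊t * 2 ^ n⌋₊ := Nat.floor_mono (by gcongr)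
      have a2 : ⌊t * 2 ^ n⌋₊ < ⌊s * 2 ^ n⌋₊ + 2 := by
        rw [Nat.floor_lt hy1]
        have h2 := Nat.lt_floor_add_one (s * 2 ^ n)
        have : (t - s) * 2 ^ n ≤ 1 := by
          calc (t - s) * 2 ^ n ≤ (1 / 2) ^ n * 2 ^ n := by gcongr
            _ = 1 := by rw [← mul_pow]; norm_num
        push_cast; linarith
      have hcase : ⌊t * 2 ^ n⌋₊ = ⌊s * 2 ^ n⌋₊ ∨ ⌊t * 2 ^ n⌋₊ = ⌊s * 2 ^ n⌋₊ + 1 := by omega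
      rcases hcase with hc | hc
      · simp only [d]; rw [hc]; simp; positivity
      · have hlt : ⌊s * 2 ^ n⌋₊ < 2 ^ n := by
          have : ⌊t * 2 ^ n⌋₊ ≤ 2 ^ n := by
            apply Nat.floor_le_of_le; push_cast
            have := ht.2
            have h5 : (0 : ℝ) < 2 ^ n := by positivity
            nlinarith
          omega
        have := hd n _ hlt
        simp only [d]; rw [hc]; push_cast; exact this
    have f1 := hfar s hs n
    have f2 := hfar t ht n
    have tri : |g t - g s| ≤ (2 * A / (1 - r) + A) * r ^ n := by
      have : g t - g s = -(g (d n t) - g t) + (g (d n t) - g (d n s)) + (g (d n s) - g s) := by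
        ring
      rw [this]
      refine (abs_add_le _ _).trans ?_
      refine (add_le_add_left (abs_add_le _ _) _).trans ?_
      rw [abs_neg]
      calc _ ≤ A * r ^ n / (1 - r) + A * r ^ n + A * r ^ n / (1 - r) := by gcongr
        _ = _ := by ring
    refine tri.trans ?_
    rw [hL, mul_assoc]
    apply mul_le_mul_of_nonneg_left _ (by positivity)
    rw [inv_mul_eq_div, le_div_iff₀ hr0, ← pow_succ]
    have : r ^ (n + 1) = ((1 / 2 : ℝ) ^ (n + 1)) ^ γ := by
      rw [hr, ← Real.rpow_natCast, ← Real.rpow_mul (by norm_num), one_div, inv_pow,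
        Real.inv_rpow (by positivity), ← Real.rpow_natCast, ← Real.rpow_mul (by norm_num),
        ← Real.rpow_neg (by norm_num)]
      congr 1; ring
    rw [this]
    exact Real.rpow_le_rpow (by positivity) hn1.le hγ.le
  refine ⟨L, hL0, fun s hs t ht => ?_⟩
  rcases lt_trichotomy s t with h | h | h
  · rw [abs_of_pos (sub_pos.2 h)]; exact main s hs t ht h
  · subst h; simp; positivity
  · rw [abs_sub_comm, abs_sub_comm t s, abs_of_pos (sub_pos.2 h)]; exact main t ht s hs h


/-- The law of an increment of fractional Brownian motion. -/
lemma fbm_increment_law {Ω : Type*} [MeasurableSpace Ω] {P : Measure Ω}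
    {ξ : ℝ → Ω → ℝ} {α C : ℝ} (hα : 0 < α) (hfbm : IsFBM P ξ α C)
    (s t : ℝ) (hs : 0 ≤ s) (ht : 0 ≤ t) :
    Measure.map (fun ω => ξ t ω - ξ s ω) P =
      gaussianReal 0 (2 * C * |t - s| ^ (1 + α)).toNNReal := by
  have h := hfbm.2 2 ![t, s] (by intro i; fin_cases i <;> simp [hs, ht]) ![1, -1]
  simp only [Fin.sum_univ_two, Matrix.cons_val_zero, Matrix.cons_val_one] at h
  have e1 : (fun ω => 1 * ξ t ω + -1 * ξ s ω) = fun ω => ξ t ω - ξ s ω := by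
    funext ω; ring
  rw [e1] at h
  rw [h]
  congr 2
  rw [abs_sub_comm s t]
  simp only [sub_self, abs_zero, Real.zero_rpow (by linarith : (1 + α) ≠ 0)]
  ring

/-- Moments of an increment. -/
lemma fbm_increment_moment {Ω : Type*} [MeasurableSpace Ω] {P : Measure Ω}
    {ξ : ℝ → Ω → ℝ} {α C : ℝ} (hα : 0 < α) (hC : 0 < C) (hfbm : IsFBM P ξ α C) (q : ℕ)
    (s t : ℝ) (hs : 0 ≤ s) (ht : 0 ≤ t) :
    ∫⁻ ω, ‖ξ t ω - ξ s ω‖ₑ ^ q ∂P =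
      ENNReal.ofReal (Real.sqrt (2 * C * |t - s| ^ (1 + α))) ^ q *
        ∫⁻ x, ‖x‖ₑ ^ q ∂(gaussianReal 0 1) := by
  have hm : Measurable (fun ω => ξ t ω - ξ s ω) := (hfbm.1 t).sub (hfbm.1 s)
  have hf : Measurable (fun x : ℝ => ‖x‖ₑ ^ q) := by fun_prop
  rw [← lintegral_map (f := fun x : ℝ => ‖x‖ₑ ^ q) hf hm,
    fbm_increment_law hα hfbm s t hs ht]
  set v := 2 * C * |t - s| ^ (1 + α)
  have hv : 0 ≤ v := by positivity
  have hmap := gaussianReal_map_const_mul (μ := 0) (v := 1) (Real.sqrt v)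
  have hvv : NNReal.mk (Real.sqrt v ^ 2) (sq_nonneg _) * 1 = v.toNNReal := by
    rw [mul_one]
    ext
    simp [Real.sq_sqrt hv, hv]
  rw [mul_zero, hvv] at hmap
  rw [← hmap, lintegral_map hf (by fun_prop), ← lintegral_const_mul _ hf]
  congr 1; funext x
  rw [enorm_mul, mul_pow, Real.enorm_of_nonneg (Real.sqrt_nonneg v)]

lemma fbm_holder {Ω : Type*} [MeasurableSpace Ω] (P : Measure Ω)
    (ξ : ℝ → Ω → ℝ) (α C T γ : ℝ) (hα : 0 < α) (hC : 0 < C) (hT : 0 < T)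
    (hfbm : IsFBM P ξ α C) (hcont : ∀ ω, Continuous fun t => ξ t ω)
    (hγ : 0 < γ) (hγ1 : γ < (1 + α) / 2) :
    ∀ᵐ ω ∂P, ∃ L : ℝ, 0 ≤ L ∧ ∀ s ∈ Icc (0 : ℝ) T, ∀ t ∈ Icc (0 : ℝ) T,
      |ξ t ω - ξ s ω| ≤ L * |t - s| ^ γ := by
  obtain ⟨q, hq⟩ := exists_pow_lt_of_lt_one (x := (1 / 2 : ℝ))
    (y := (2 : ℝ) ^ (γ - (1 + α) / 2)) (by norm_num)
    (Real.rpow_lt_one_of_one_lt_of_neg (by norm_num) (by linarith))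
  have hq0 : q ≠ 0 := by rintro rfl; norm_num at hq
  set M := ∫⁻ x, ‖x‖ₑ ^ q ∂(gaussianReal 0 1) with hM
  have hMtop : M ≠ ⊤ := by
    have := (memLp_id_gaussianReal (μ := 0) (v := 1) (q : NNReal)).eLpNorm_lt_top
    have h2 := lintegral_rpow_enorm_lt_top_of_eLpNorm_lt_top (p := ((q : NNReal) : ENNReal))
      (by simpa using hq0) (by simp) this
    simp at h2
    exact h2.ne
  let Δ : ℕ → ℕ → Ω → ℝ := fun n k ω => ξ (T * ((k + 1) / 2 ^ n)) ω - ξ (T * (k / 2 ^ n)) ω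
  let c : ℝ := Real.sqrt (2 * C * T ^ (1 + α))
  have hc0 : 0 ≤ c := Real.sqrt_nonneg _
  let G : ℝ := (2 : ℝ) ^ γ
  have hG : 0 < G := by positivity
  let Y : Ω → ENNReal := fun ω => ∑' n : ℕ, ∑ k ∈ Finset.range (2 ^ n),
    (ENNReal.ofReal (G ^ n)) ^ q * ‖Δ n k ω‖ₑ ^ q
  have hΔm : ∀ n k, Measurable (Δ n k) := fun n k => (hfbm.1 _).sub (hfbm.1 _)
  have hYm : Measurable Y := by
    apply Measurable.tsum
    intro n
    apply Finset.measurable_sum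
    intro k _
    exact ((hΔm n k).enorm.pow_const q).const_mul _
  have hmom : ∀ n k, ∫⁻ ω, ‖Δ n k ω‖ₑ ^ q ∂P =
      ENNReal.ofReal (c * ((2 : ℝ) ^ (-((1 + α) / 2))) ^ n) ^ q * M := by
    intro n k
    rw [fbm_increment_moment hα hC hfbm q _ _ (by positivity) (by positivity)]
    congr 3
    have e : |T * (((k : ℝ) + 1) / 2 ^ n) - T * (k / 2 ^ n)| = T * ((1 / 2) ^ n) := by
      rw [← mul_sub, ← sub_div, add_sub_cancel_left, abs_of_pos (by positivity)]
      simp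
    rw [e, Real.mul_rpow hT.le (by positivity), ← mul_assoc, Real.sqrt_mul (by positivity)]
    congr 1
    rw [Real.sqrt_eq_rpow, one_div, inv_pow, ← Real.rpow_natCast, ← Real.rpow_natCast,
      ← Real.rpow_neg (by norm_num), ← Real.rpow_mul (by norm_num), ← Real.rpow_mul (by norm_num),
      ← Real.rpow_mul (by norm_num)]
    congr 1; ring
  have hYint : ∫⁻ ω, Y ω ∂P ≠ ⊤ := by
    have e1 : ∫⁻ ω, Y ω ∂P = ∑' n : ℕ, ENNReal.ofReal (c ^ q) * M *
        (ENNReal.ofReal (2 * ((2 : ℝ) ^ (γ - (1 + α) / 2)) ^ q)) ^ n := by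
      simp only [Y]
      rw [lintegral_tsum]
      · congr 1; funext n
        rw [lintegral_finsetSum]
        · simp_rw [lintegral_const_mul _ ((hΔm n _).enorm.pow_const q), hmom]
          rw [Finset.sum_const, Finset.card_range, nsmul_eq_mul]
          have e2 : ((2 ^ n : ℕ) : ENNReal) = ENNReal.ofReal (2 ^ n) := by
            rw [ENNReal.ofReal_pow (by norm_num)]; simp
          rw [e2, ← ENNReal.ofReal_pow (by positivity), ← ENNReal.ofReal_pow (by positivity),
            ← ENNReal.ofReal_pow (by positivity), ← mul_assoc, ← mul_assoc,
            ← ENNReal.ofReal_mul (by positivity), ← ENNReal.ofReal_mul (by positivity),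
            mul_right_comm (ENNReal.ofReal (c ^ q)) M, ← ENNReal.ofReal_mul (by positivity)]
          congr 2
          simp only [G]
          rw [sub_eq_add_neg γ, Real.rpow_add (by norm_num)]
          simp only [mul_pow]
          rw [← pow_mul, ← pow_mul, ← pow_mul, ← pow_mul, mul_comm q n]
          ring
        · intro k _
          exact ((hΔm n k).enorm.pow_const q).const_mul _
      · intro n
        refine (Finset.measurable_sum _ ?_).aemeasurable
        intro k _
        exact ((hΔm n k).enorm.pow_const q).const_mul _
    rw [e1, ENNReal.tsum_mul_left, ENNReal.tsum_geometric]
    apply ENNReal.mul_ne_top (ENNReal.mul_ne_top ENNReal.ofReal_ne_top hMtop)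
    apply ENNReal.inv_ne_top.2
    rw [Ne, tsub_eq_zero_iff_le, not_le]
    rw [← ENNReal.ofReal_one]
    apply (ENNReal.ofReal_lt_ofReal_iff (by norm_num)).2
    linarith
  filter_upwards [ae_lt_top hYm hYint] with ω hω
  have hbound : ∀ n k : ℕ, k < 2 ^ n → |Δ n k ω| ≤ max 1 (Y ω).toReal * ((2 : ℝ) ^ (-γ)) ^ n := by
    intro n k hk
    have h1 : (ENNReal.ofReal (G ^ n)) ^ q * ‖Δ n k ω‖ₑ ^ q ≤ Y ω := by
      refine le_trans ?_ (ENNReal.le_tsum n)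
      exact Finset.single_le_sum (f := fun k => (ENNReal.ofReal (G ^ n)) ^ q * ‖Δ n k ω‖ₑ ^ q)
        (fun _ _ => zero_le) (Finset.mem_range.2 hk)
    have h2 : (G ^ n * |Δ n k ω|) ^ q ≤ (Y ω).toReal := by
      rw [← ENNReal.ofReal_le_iff_le_toReal hω.ne]
      refine le_trans (le_of_eq ?_) h1
      rw [← Real.norm_eq_abs, mul_pow, ENNReal.ofReal_mul (by positivity),
        ENNReal.ofReal_pow (by positivity), ENNReal.ofReal_pow (norm_nonneg _), ofReal_norm]
    have h3 : G ^ n * |Δ n k ω| ≤ max 1 (Y ω).toReal := by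
      rcases le_total (G ^ n * |Δ n k ω|) 1 with h | h
      · exact h.trans (le_max_left _ _)
      · exact ((le_self_pow₀ h hq0).trans h2).trans (le_max_right _ _)
    have hGi : ((2 : ℝ) ^ (-γ)) ^ n = (G ^ n)⁻¹ := by
      rw [Real.rpow_neg (by norm_num), inv_pow]
    rw [hGi, ← div_eq_mul_inv, le_div_iff₀ (by positivity), mul_comm]
    exact h3
  obtain ⟨L, hL0, hL⟩ := holder_of_dyadic (fun u => ξ (T * u) ω)
    ((hcont ω).comp (continuous_const.mul continuous_id)) γ _ hγ hbound
  refine ⟨L * (T⁻¹) ^ γ, by positivity, fun s hs t ht => ?_⟩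
  have := hL (s / T) ⟨div_nonneg hs.1 hT.le, (div_le_one hT).2 hs.2⟩
    (t / T) ⟨div_nonneg ht.1 hT.le, (div_le_one hT).2 ht.2⟩
  simp only [mul_div_cancel₀ _ hT.ne'] at this
  refine this.trans (le_of_eq ?_)
  rw [← sub_div, abs_div, abs_of_pos hT, div_eq_mul_inv, Real.mul_rpow (abs_nonneg _) (by positivity)]
  ring


lemma bisect_index (u : ℕ → ℝ) (hu : Monotone u) (i k : ℕ) (hik : i < k) :
    ∃ m, i ≤ m ∧ m < k ∧ u m - u i ≤ (u k - u i) / 2 ∧ u k - u (m + 1) ≤ (u k - u i) / 2 := by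
  induction k, hik using Nat.le_induction with
  | base => exact ⟨i, le_rfl, Nat.lt_succ_self i, by
      have := hu (Nat.le_succ i); simp only [Nat.succ_eq_add_one] at this; linarith, by
      have := hu (Nat.le_succ i); simp only [Nat.succ_eq_add_one] at this; linarith⟩
  | succ k hk ih =>
    by_cases h : u k - u i ≤ (u (k + 1) - u i) / 2
    · refine ⟨k, (Nat.lt_of_succ_le hk).le, Nat.lt_succ_self k, h, ?_⟩
      have := hu (hk.trans (Nat.le_succ k))
      have h2 := hu (Nat.le_succ i)
      simp only [Nat.succ_eq_add_one] at this h2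
      linarith
    · push Not at h
      clear ih
      -- the largest index at distance at most half
      have hex : ∃ m, i ≤ m ∧ m ≤ k ∧ u m - u i ≤ (u (k + 1) - u i) / 2 := by
        refine ⟨i, le_rfl, (Nat.lt_of_succ_le hk).le, ?_⟩
        have := hu ((Nat.lt_of_succ_le hk).le.trans (Nat.le_succ k))
        simp only [Nat.succ_eq_add_one] at this
        linarith
      classical
      obtain ⟨m0, h0, h0k, h0u⟩ := hex
      let p : ℕ → Prop := fun m => i ≤ m ∧ u m - u i ≤ (u (k + 1) - u i) / 2
      have hp : p (Nat.findGreatest p k) := Nat.findGreatest_spec h0k ⟨h0, h0u⟩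
      have hle : Nat.findGreatest p k ≤ k := Nat.findGreatest_le k
      refine ⟨Nat.findGreatest p k, hp.1, by omega, hp.2, ?_⟩
      rcases hle.eq_or_lt with he | hlt
      · exfalso; rw [he] at hp; linarith [hp.2]
      · have := Nat.findGreatest_is_greatest (P := p) (Nat.lt_succ_self _) hlt
        simp only [p, not_and, not_le] at this
        have := this (hp.1.trans (Nat.le_succ _))
        simp only [Nat.succ_eq_add_one] at this
        linarith

lemma two_rpow_aux {θ : ℝ} (hθ : 1 < θ) : (2 : ℝ) ^ (1 - θ) < 1 :=
  Real.rpow_lt_one_of_one_lt_of_neg (by norm_num) (by linarith)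

lemma half_rpow_aux {θ d : ℝ} (hd : 0 ≤ d) :
    2 * (d / 2) ^ θ = (2 : ℝ) ^ (1 - θ) * d ^ θ := by
  rw [Real.div_rpow hd (by norm_num), Real.rpow_sub (by norm_num), Real.rpow_one]
  ring

/-- Discrete sewing lemma. -/
lemma sew (θ : ℝ) (hθ : 1 < θ) (u : ℕ → ℝ) (hu : Monotone u) (E : ℕ → ℕ → ℝ)
    (hE0 : ∀ i, E i i = 0) (hE1 : ∀ i, E i (i + 1) = 0) (K : ℝ) (hK : 0 ≤ K) (a N : ℕ)
    (hE : ∀ i j k, a ≤ i → i ≤ j → j ≤ k → k ≤ N →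
      |E i k - E i j - E j k| ≤ K * (u k - u i) ^ θ) :
    ∀ i k, a ≤ i → i ≤ k → k ≤ N →
      |E i k| ≤ 2 / (1 - (2 : ℝ) ^ (1 - θ)) * K * (u k - u i) ^ θ := by
  set κ := (2 : ℝ) ^ (1 - θ) with hκ
  have hκ1 : κ < 1 := two_rpow_aux hθ
  have hκ0 : 0 < κ := by positivity
  have h1κ : 0 < 1 - κ := by linarith
  set Q := 2 / (1 - κ) with hQ
  have hQ0 : 0 < Q := by positivity
  have key : ∀ n i k, k - i = n → a ≤ i → i ≤ k → k ≤ N →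
      |E i k| ≤ Q * K * (u k - u i) ^ θ := by
    intro n
    induction n using Nat.strong_induction_on with
    | _ n ih =>
      intro i k hn hai hik hkN
      have hd : 0 ≤ u k - u i := sub_nonneg.2 (hu hik)
      rcases hik.eq_or_lt with rfl | hlt
      · rw [hE0]; simp; positivity
      obtain ⟨m, him, hmk, h1, h2⟩ := bisect_index u hu i k hlt
      have a1 := ih (m - i) (by omega) i m rfl hai him (by omega)
      have a2 := ih (k - (m + 1)) (by omega) (m + 1) k rfl (by omega) (by omega) hkN
      have b1 := hE i m k hai him hmk.le hkN
      have b2 := hE m (m + 1) k (by omega) (by omega) (by omega) hkN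
      rw [hE1 m] at b2
      have hm1 : 0 ≤ u m - u i := sub_nonneg.2 (hu him)
      have hm2 : 0 ≤ u k - u (m + 1) := sub_nonneg.2 (hu hmk)
      have hm3 : 0 ≤ u k - u m := sub_nonneg.2 (hu hmk.le)
      have c1 : (u m - u i) ^ θ ≤ ((u k - u i) / 2) ^ θ := Real.rpow_le_rpow hm1 h1 (by linarith)
      have c2 : (u k - u (m + 1)) ^ θ ≤ ((u k - u i) / 2) ^ θ :=
        Real.rpow_le_rpow hm2 h2 (by linarith)
      have c3 : (u k - u m) ^ θ ≤ (u k - u i) ^ θ :=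
        Real.rpow_le_rpow hm3 (by linarith) (by linarith)
      have hQK : 0 ≤ Q * K := by positivity
      have d1 := a1.trans (mul_le_mul_of_nonneg_left c1 hQK)
      have d2 := a2.trans (mul_le_mul_of_nonneg_left c2 hQK)
      have d3 := b2.trans (mul_le_mul_of_nonneg_left c3 hK)
      have hh := half_rpow_aux (θ := θ) hd
      have e : Q * K * (u k - u i) ^ θ =
          Q * K * (2 * ((u k - u i) / 2) ^ θ) + 2 * (K * (u k - u i) ^ θ) := by
        rw [hh, ← hκ]
        have : Q * (1 - κ) = 2 := by rw [hQ]; field_simp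
        linear_combination (K * (u k - u i) ^ θ) * this
      rw [e, abs_le]
      rw [abs_le] at d1 d2 d3 b1
      constructor <;> linarith [d1.1, d1.2, d2.1, d2.2, d3.1, d3.2, b1.1, b1.2]
  intro i k hai hik hkN
  exact key _ i k rfl hai hik hkN

lemma RSsum_eq (f g : ℝ → ℝ) (n : ℕ) (u : ℕ → ℝ) :
    RSsum f g n (fun i => u i) = ∑ k ∈ Finset.range n, f (u k) * (g (u (k + 1)) - g (u k)) := by
  unfold RSsum
  rw [← Fin.sum_univ_eq_sum_range (fun k => f (u k) * (g (u (k + 1)) - g (u k))) n]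
  simp

/-- Young estimate for the Riemann–Stieltjes integral. -/
lemma young_est (f g : ℝ → ℝ) (β γ Cf L s t I₁ I₂ : ℝ) (hβ : 0 < β) (hγ : 0 < γ)
    (hθ : 1 < β + γ) (hs : 0 ≤ s) (hst : s ≤ t) (hCf : 0 ≤ Cf) (hL : 0 ≤ L)
    (hf : ∀ p ∈ Icc s t, ∀ r ∈ Icc s t, |f r - f p| ≤ Cf * |r - p| ^ β)
    (hg : ∀ p ∈ Icc s t, ∀ r ∈ Icc s t, |g r - g p| ≤ L * |r - p| ^ γ)
    (h1 : IsRSIntegral f g 0 s I₁) (h2 : IsRSIntegral f g 0 t I₂) :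
    |I₂ - I₁ - f s * (g t - g s)| ≤
      2 / (1 - (2 : ℝ) ^ (1 - (β + γ))) * (Cf * L) * (t - s) ^ (β + γ) := by
  apply le_of_forall_pos_le_add
  intro ε hε
  obtain ⟨δ₁, hδ₁, H1⟩ := h1 (ε / 2) (by positivity)
  obtain ⟨δ₂, hδ₂, H2⟩ := h2 (ε / 2) (by positivity)
  obtain ⟨n, hn⟩ := exists_nat_gt (t / min δ₁ δ₂)
  have ht0 : 0 ≤ t := hs.trans hst
  have hmin : 0 < min δ₁ δ₂ := lt_min hδ₁ hδ₂
  have hn0 : (0 : ℝ) < n := lt_of_le_of_lt (by positivity) hn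
  have hn' : t / n < min δ₁ δ₂ := by
    rw [div_lt_iff₀ hn0]; rw [div_lt_iff₀ hmin] at hn; linarith
  let u : ℕ → ℝ := fun k => if k ≤ n then k * (s / n) else s + (k - n) * ((t - s) / n)
  have hun : u n = s := by simp only [u, le_refl, if_true]; field_simp
  have hu0 : u 0 = 0 := by simp [u]
  have hstep : ∀ k, 0 ≤ u (k + 1) - u k ∧ u (k + 1) - u k ≤ t / n := by
    intro k
    have q1 : 0 ≤ s / n := by positivity
    have q2 : 0 ≤ (t - s) / n := div_nonneg (by linarith) hn0.le
    have q3 : s / n + (t - s) / n = t / n := by ring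
    rcases lt_trichotomy k n with h | h | h
    · have e1 : u (k + 1) = ((k : ℝ) + 1) * (s / n) := by
        simp only [u]; rw [if_pos (by omega)]; push_cast; ring
      have e2 : u k = k * (s / n) := by simp only [u]; rw [if_pos h.le]
      rw [e1, e2]; constructor <;> linarith
    · subst h
      have e1 : u (k + 1) = s + (t - s) / k := by
        simp only [u]; rw [if_neg (by omega)]; push_cast; ring
      rw [e1, hun]; constructor <;> linarith
    · have e1 : u (k + 1) = s + ((k : ℝ) + 1 - n) * ((t - s) / n) := by
        simp only [u]; rw [if_neg (by omega)]; push_cast; ring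
      have e2 : u k = s + ((k : ℝ) - n) * ((t - s) / n) := by
        simp only [u]; rw [if_neg (by omega)]
      rw [e1, e2]; constructor <;> linarith
  have hu : Monotone u := monotone_nat_of_le_succ fun k => by linarith [(hstep k).1]
  have hnn : n ≠ 0 := by rintro rfl; simp at hn0
  have hu2 : u (n + n) = t := by
    simp only [u]; rw [if_neg (by omega)]; push_cast; field_simp; ring
  have B1 := H1 n (fun i => u i) (fun i j hij => hu hij) (by simpa using hu0)
    (by simpa using hun) (fun i => by
      have := (hstep i).2.trans_lt (hn'.trans_le (min_le_left _ _)); simpa using this)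
  have B2 := H2 (n + n) (fun i => u i) (fun i j hij => hu hij) (by simpa using hu0)
    (by simpa using hu2) (fun i => by
      have := (hstep i).2.trans_lt (hn'.trans_le (min_le_right _ _)); simpa using this)
  rw [RSsum_eq] at B1 B2
  let w : ℕ → ℝ := fun k => f (u k) * (g (u (k + 1)) - g (u k))
  let E : ℕ → ℕ → ℝ := fun i k => (∑ l ∈ Finset.Ico i k, w l) - f (u i) * (g (u k) - g (u i))
  have hmem : ∀ i, n ≤ i → i ≤ n + n → u i ∈ Icc s t := fun i h1 h2 =>
    ⟨hun ▸ hu h1, hu2 ▸ hu h2⟩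
  have S := sew (β + γ) hθ u hu E (by intro i; simp [E]) (by intro i; simp [E, w]) (Cf * L)
    (by positivity) n (n + n) (by
      intro i j k hi hij hjk hk
      have e : E i k - E i j - E j k = (f (u j) - f (u i)) * (g (u k) - g (u j)) := by
        simp only [E]
        rw [← Finset.sum_Ico_consecutive w hij hjk]; ring
      rw [e, abs_mul]
      have m1 := hmem i hi (by omega)
      have m2 := hmem j (by omega) (by omega)
      have m3 := hmem k (by omega) hk
      have o1 : 0 ≤ u j - u i := sub_nonneg.2 (hu hij)
      have o2 : 0 ≤ u k - u j := sub_nonneg.2 (hu hjk)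
      calc |f (u j) - f (u i)| * |g (u k) - g (u j)|
          ≤ (Cf * |u j - u i| ^ β) * (L * |u k - u j| ^ γ) := by
            gcongr
            · exact hf _ m1 _ m2
            · exact hg _ m2 _ m3
        _ ≤ (Cf * (u k - u i) ^ β) * (L * (u k - u i) ^ γ) := by
            rw [abs_of_nonneg o1, abs_of_nonneg o2]
            have p0 : 0 ≤ Cf * (u k - u i) ^ β :=
              mul_nonneg hCf (Real.rpow_nonneg (by linarith) _)
            gcongr <;> linarith
        _ = Cf * L * (u k - u i) ^ (β + γ) := by
            rw [Real.rpow_add_of_nonneg (by linarith) hβ.le hγ.le]; ring) n (n + n) le_rfl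
    (by omega) le_rfl
  rw [hun, hu2] at S
  have eE : E n (n + n) = (∑ k ∈ Finset.range (n + n), w k) - (∑ k ∈ Finset.range n, w k)
      - f s * (g t - g s) := by
    simp only [E]
    rw [hun, hu2, Finset.sum_Ico_eq_sub _ (by omega)]
  rw [eE] at S
  simp only [w] at S
  rw [abs_lt] at B1 B2
  rw [abs_le] at S ⊢
  constructor <;> linarith [S.1, S.2, B1.1, B1.2, B2.1, B2.2]

lemma IsRSIntegral.sub {f₁ f₂ g : ℝ → ℝ} {a b I₁ I₂ : ℝ} (h1 : IsRSIntegral f₁ g a b I₁)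
    (h2 : IsRSIntegral f₂ g a b I₂) : IsRSIntegral (fun t => f₁ t - f₂ t) g a b (I₁ - I₂) := by
  intro ε hε
  obtain ⟨δ₁, hδ₁, H1⟩ := h1 (ε / 2) (by positivity)
  obtain ⟨δ₂, hδ₂, H2⟩ := h2 (ε / 2) (by positivity)
  refine ⟨min δ₁ δ₂, lt_min hδ₁ hδ₂, fun n t hm h0 hl hd => ?_⟩
  have B1 := H1 n t hm h0 hl fun i => (hd i).trans_le (min_le_left _ _)
  have B2 := H2 n t hm h0 hl fun i => (hd i).trans_le (min_le_right _ _)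
  have e : RSsum (fun t => f₁ t - f₂ t) g n t = RSsum f₁ g n t - RSsum f₂ g n t := by
    unfold RSsum
    rw [← Finset.sum_sub_distrib]
    exact Finset.sum_congr rfl fun i _ => by ring
  rw [e]
  rw [abs_lt] at *
  constructor <;> linarith [B1.1, B1.2, B2.1, B2.2]

lemma IsRSIntegral.self_eq_zero {f g : ℝ → ℝ} {a I : ℝ} (h : IsRSIntegral f g a a I) : I = 0 := by
  by_contra hne
  obtain ⟨δ, hδ, H⟩ := h |I| (abs_pos.2 hne)
  have := H 0 (fun _ => a) (fun _ _ _ => le_rfl) rfl rfl (fun i => i.elim0)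
  simp [RSsum] at this


/-- Hölder continuity on an interval, with explicit constant. -/
def HolD (f : ℝ → ℝ) (D γ a c : ℝ) : Prop :=
  ∀ s ∈ Icc a c, ∀ t ∈ Icc a c, |f t - f s| ≤ D * |t - s| ^ γ

lemma HolD.of_le {f : ℝ → ℝ} {D γ a c : ℝ}
    (h : ∀ s ∈ Icc a c, ∀ t ∈ Icc a c, s ≤ t → |f t - f s| ≤ D * (t - s) ^ γ) :
    HolD f D γ a c := by
  intro s hs t ht
  rcases le_total s t with hst | hst
  · rw [abs_of_nonneg (sub_nonneg.2 hst)]; exact h s hs t ht hst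
  · rw [abs_sub_comm, abs_sub_comm t s, abs_of_nonneg (sub_nonneg.2 hst)]
    exact h t ht s hs hst

lemma HolD.continuousOn {f : ℝ → ℝ} {D γ a c : ℝ} (hγ : 0 < γ) (h : HolD f D γ a c) :
    ContinuousOn f (Icc a c) := by
  intro s hs
  rw [ContinuousWithinAt, tendsto_iff_dist_tendsto_zero]
  have h1 : Filter.Tendsto (fun t => D * |t - s| ^ γ) (nhdsWithin s (Icc a c)) (nhds 0) := by
    have : Continuous fun t : ℝ => D * |t - s| ^ γ := by
      refine continuous_const.mul (Continuous.rpow_const (by fun_prop) ?_)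
      intro _; right; exact hγ.le
    have h2 := (this.tendsto s).mono_left (nhdsWithin_le_nhds (s := Icc a c))
    simpa [Real.zero_rpow hγ.ne'] using h2
  refine squeeze_zero' (Filter.Eventually.of_forall fun _ => dist_nonneg) ?_ h1
  filter_upwards [self_mem_nhdsWithin] with t ht
  rw [Real.dist_eq]
  exact h s hs t ht

lemma rpow_split {d T p q : ℝ} (hd : 0 ≤ d) (hdT : d ≤ T) (hp : 0 ≤ p) (hq : 0 ≤ q) :
    d ^ (p + q) ≤ T ^ p * d ^ q := by
  rw [Real.rpow_add_of_nonneg hd hp hq]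
  have := Real.rpow_le_rpow hd hdT hp
  have := Real.rpow_nonneg hd q
  gcongr

lemma rpow_split_one {d T q : ℝ} (hd : 0 ≤ d) (hdT : d ≤ T) (hq : 0 ≤ q) (hq1 : q ≤ 1) :
    d ≤ T ^ (1 - q) * d ^ q := by
  have := rpow_split (p := 1 - q) (q := q) hd hdT (by linarith) hq
  simpa using this

lemma HolD.comp_lip {φ : ℝ → ℝ → ℝ} {x : ℝ → ℝ} {S D γ T : ℝ} (hS : 0 ≤ S)
    (hγ : 0 ≤ γ) (hγ1 : γ ≤ 1)
    (hφ : ∀ t₁ x₁ t₂ x₂ : ℝ, |φ t₂ x₂ - φ t₁ x₁| ≤ S * (|t₂ - t₁| + |x₂ - x₁|))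
    (hx : HolD x D γ 0 T) : HolD (fun τ => φ τ (x τ)) (S * (T ^ (1 - γ) + D)) γ 0 T := by
  intro s hs t ht
  have h1 := hx s hs t ht
  have h2 : |t - s| ≤ T ^ (1 - γ) * |t - s| ^ γ := by
    apply rpow_split_one (abs_nonneg _) _ hγ hγ1
    rw [abs_le]; constructor <;> linarith [hs.1, hs.2, ht.1, ht.2]
  calc _ ≤ S * (|t - s| + |x t - x s|) := hφ _ _ _ _
    _ ≤ S * (T ^ (1 - γ) * |t - s| ^ γ + D * |t - s| ^ γ) := by gcongr
    _ = _ := by ring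

lemma lip_const_nonneg {φ : ℝ → ℝ → ℝ} {S : ℝ}
    (hφ : ∀ t₁ x₁ t₂ x₂ : ℝ, |φ t₂ x₂ - φ t₁ x₁| ≤ S * (|t₂ - t₁| + |x₂ - x₁|)) : 0 ≤ S := by
  have := (abs_nonneg _).trans (hφ 0 0 1 0)
  simpa using this

lemma lip_continuous {φ : ℝ → ℝ → ℝ} {S : ℝ}
    (hφ : ∀ t₁ x₁ t₂ x₂ : ℝ, |φ t₂ x₂ - φ t₁ x₁| ≤ S * (|t₂ - t₁| + |x₂ - x₁|)) :
    Continuous fun p : ℝ × ℝ => φ p.1 p.2 := by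
  rw [continuous_iff_continuousAt]
  intro p
  rw [ContinuousAt, tendsto_iff_dist_tendsto_zero]
  have h1 : Filter.Tendsto (fun q : ℝ × ℝ => S * (|q.1 - p.1| + |q.2 - p.2|)) (nhds p)
      (nhds 0) := by
    have : Continuous fun q : ℝ × ℝ => S * (|q.1 - p.1| + |q.2 - p.2|) := by fun_prop
    simpa using this.tendsto p
  refine squeeze_zero (fun _ => dist_nonneg) (fun q => ?_) h1
  rw [Real.dist_eq]
  exact hφ _ _ _ _

lemma HolD.bdd {f : ℝ → ℝ} {D γ T : ℝ} (hγ : 0 ≤ γ) (hT : 0 ≤ T) (hD : 0 ≤ D)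
    (h : HolD f D γ 0 T) :
    ∀ t ∈ Icc 0 T, |f t| ≤ |f 0| + D * T ^ γ := by
  intro t ht
  have h1 := h 0 ⟨le_rfl, hT⟩ t ht
  rw [sub_zero, abs_of_nonneg ht.1] at h1
  have h2 : D * t ^ γ ≤ D * T ^ γ := by
    have := Real.rpow_le_rpow ht.1 ht.2 hγ
    gcongr
  have h3 : |f t| ≤ |f 0| + |f t - f 0| := by
    have := abs_add_le (f 0) (f t - f 0)
    simpa using this
  linarith

/-- Deterministic version of the solution property. -/
def DetSol (b σ : ℝ → ℝ → ℝ) (g : ℝ → ℝ) (z T : ℝ) (x : ℝ → ℝ) : Prop :=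
  ∀ t ∈ Icc (0 : ℝ) T, ∃ I : ℝ,
    IsRSIntegral (fun τ => σ τ (x τ)) g 0 t I ∧
    x t = z + (∫ τ in (0 : ℝ)..t, b τ (x τ)) + I

lemma intble_of_contOn {f : ℝ → ℝ} {T s t : ℝ} (hf : ContinuousOn f (Icc 0 T))
    (hs : s ∈ Icc 0 T) (ht : t ∈ Icc 0 T) : IntervalIntegrable f volume s t := by
  apply ContinuousOn.intervalIntegrable
  apply hf.mono
  intro r hr
  rw [Set.mem_uIcc] at hr
  rcases hr with h | h
  · exact ⟨hs.1.trans h.1, h.2.trans ht.2⟩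
  · exact ⟨ht.1.trans h.1, h.2.trans hs.2⟩

lemma integral_bound {f : ℝ → ℝ} {s t M : ℝ} (hst : s ≤ t)
    (hf : ∀ r ∈ Icc s t, |f r| ≤ M) : |∫ r in s..t, f r| ≤ M * (t - s) := by
  have := intervalIntegral.norm_integral_le_of_norm_le_const (a := s) (b := t) (f := f) (C := M)
    (by
      intro r hr
      rw [Set.uIoc_of_le hst] at hr
      exact hf r ⟨hr.1.le, hr.2⟩)
  rwa [abs_of_nonneg (sub_nonneg.2 hst), Real.norm_eq_abs] at this

/-- A `β`-Hölder solution is automatically `γ`-Hölder. -/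
lemma bootstrap (b σ : ℝ → ℝ → ℝ) (g x : ℝ → ℝ) (z T β γ B S L Cx : ℝ) (hT : 0 < T)
    (hβ : 0 < β) (hβ1 : β ≤ 1) (hγ : 0 < γ) (hγ1 : γ ≤ 1) (hθ : 1 < β + γ) (hL : 0 ≤ L)
    (hb : ∀ t₁ x₁ t₂ x₂ : ℝ, |b t₂ x₂ - b t₁ x₁| ≤ B * (|t₂ - t₁| + |x₂ - x₁|))
    (hσ : ∀ t₁ x₁ t₂ x₂ : ℝ, |σ t₂ x₂ - σ t₁ x₁| ≤ S * (|t₂ - t₁| + |x₂ - x₁|))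
    (hg : HolD g L γ 0 T) (hx : HolD x Cx β 0 T) (hsol : DetSol b σ g z T x) :
    ∃ D, 0 ≤ D ∧ HolD x D γ 0 T := by
  have hCx : 0 ≤ Cx := by
    have := (abs_nonneg _).trans (hx 0 ⟨le_rfl, hT.le⟩ T ⟨hT.le, le_rfl⟩)
    rw [sub_zero, abs_of_pos hT] at this
    exact nonneg_of_mul_nonneg_left this (by positivity)
  have hB := lip_const_nonneg hb
  have hS := lip_const_nonneg hσ
  have hbx := HolD.comp_lip hB hβ.le hβ1 hb hx
  have hσx := HolD.comp_lip hS hβ.le hβ1 hσ hx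
  have hbb := hbx.bdd hβ.le hT.le (by positivity)
  have hσb := hσx.bdd hβ.le hT.le (by positivity)
  set Cb := |b 0 (x 0)| + B * (T ^ (1 - β) + Cx) * T ^ β with hCb
  set Cs := |σ 0 (x 0)| + S * (T ^ (1 - β) + Cx) * T ^ β with hCs
  set Cf := S * (T ^ (1 - β) + Cx) with hCf
  have hCf0 : 0 ≤ Cf := by positivity
  have hCb0 : 0 ≤ Cb := by positivity
  have hCs0 : 0 ≤ Cs := by positivity
  set Q := 2 / (1 - (2 : ℝ) ^ (1 - (β + γ))) with hQ
  have hQ0 : 0 ≤ Q := by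
    have := two_rpow_aux hθ
    exact div_nonneg (by norm_num) (by linarith)
  refine ⟨Cb * T ^ (1 - γ) + Cs * L + Q * (Cf * L) * T ^ β, by positivity, HolD.of_le ?_⟩
  intro s hs t ht hst
  obtain ⟨I₁, r1, e1⟩ := hsol s hs
  obtain ⟨I₂, r2, e2⟩ := hsol t ht
  have hsub : ∀ p ∈ Icc s t, p ∈ Icc 0 T := fun p hp => ⟨hs.1.trans hp.1, hp.2.trans ht.2⟩
  have Y := young_est (fun τ => σ τ (x τ)) g β γ Cf L s t I₁ I₂ hβ hγ hθ hs.1 hst hCf0 hL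
    (fun p hp r hr => hσx p (hsub p hp) r (hsub r hr))
    (fun p hp r hr => hg p (hsub p hp) r (hsub r hr)) r1 r2
  have hco := hbx.continuousOn hβ
  have hint : (∫ τ in (0 : ℝ)..t, b τ (x τ)) - (∫ τ in (0 : ℝ)..s, b τ (x τ)) =
      ∫ τ in s..t, b τ (x τ) :=
    intervalIntegral.integral_interval_sub_left
      (intble_of_contOn hco ⟨le_rfl, hT.le⟩ ht) (intble_of_contOn hco ⟨le_rfl, hT.le⟩ hs)
  have hib := integral_bound hst (fun r hr => hbb r (hsub r hr))
  have hd : 0 ≤ t - s := sub_nonneg.2 hst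
  have hdT : t - s ≤ T := by linarith [hs.1, ht.2]
  have k1 := rpow_split_one hd hdT hγ.le hγ1
  have k2 := rpow_split hd hdT hβ.le hγ.le
  have hgs := hg s hs t ht
  rw [abs_of_nonneg hd] at hgs
  have ex : x t - x s = (∫ τ in s..t, b τ (x τ)) + σ s (x s) * (g t - g s) +
      (I₂ - I₁ - σ s (x s) * (g t - g s)) := by
    rw [e1, e2, ← hint]; ring
  rw [ex]
  refine (abs_add_le _ _).trans ((add_le_add_left (abs_add_le _ _) _).trans ?_)
  rw [abs_mul]
  calc _ ≤ Cb * (t - s) + Cs * (L * (t - s) ^ γ) + Q * (Cf * L) * (t - s) ^ (β + γ) := by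
        gcongr
        exact hσb s hs
    _ ≤ Cb * (T ^ (1 - γ) * (t - s) ^ γ) + Cs * (L * (t - s) ^ γ) +
        Q * (Cf * L) * (T ^ β * (t - s) ^ γ) := by gcongr
    _ = _ := by ring

/-- Four point estimate. -/
lemma four_point (σ σx : ℝ → ℝ → ℝ) (S : ℝ)
    (hσdx : ∀ t x : ℝ, HasDerivAt (fun y => σ t y) (σx t x) x)
    (hσ : ∀ t₁ x₁ t₂ x₂ : ℝ, |σ t₂ x₂ - σ t₁ x₁| ≤ S * (|t₂ - t₁| + |x₂ - x₁|))
    (hσx : ∀ t₁ x₁ t₂ x₂ : ℝ, |σx t₂ x₂ - σx t₁ x₁| ≤ S * (|t₂ - t₁| + |x₂ - x₁|))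
    (s t x₁ y₁ x₂ y₂ : ℝ) :
    |(σ t x₂ - σ t y₂) - (σ s x₁ - σ s y₁)| ≤
      S * |(x₂ - y₂) - (x₁ - y₁)| +
        S * (|t - s| + |x₂ - x₁| + |y₂ - y₁|) * |x₁ - y₁| := by
  have hS := lip_const_nonneg hσ
  have hbd : ∀ t x, |σx t x| ≤ S := by
    intro t x
    have := (hσdx t x).le_of_lip' (C := S) hS (Filter.Eventually.of_forall fun y => by
      have := hσ t x t y
      simpa using this)
    simpa using this
  let φ : ℝ → ℝ := fun l => σ t (y₂ + l * (x₂ - y₂)) - σ s (y₁ + l * (x₁ - y₁))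
  let φ' : ℝ → ℝ := fun l => σx t (y₂ + l * (x₂ - y₂)) * (x₂ - y₂) -
    σx s (y₁ + l * (x₁ - y₁)) * (x₁ - y₁)
  have hφ : ∀ l, HasDerivAt φ (φ' l) l := by
    intro l
    have a : ∀ p q : ℝ, HasDerivAt (fun l : ℝ => p + l * q) q l := by
      intro p q
      simpa using ((hasDerivAt_id l).mul_const q).const_add p
    exact ((hσdx t _).comp l (a y₂ _)).sub ((hσdx s _).comp l (a y₁ _))
  obtain ⟨l, hl, hd⟩ := exists_hasDerivAt_eq_slope φ φ' (zero_lt_one)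
    (fun l _ => (hφ l).continuousAt.continuousWithinAt) (fun l _ => hφ l)
  have e : (σ t x₂ - σ t y₂) - (σ s x₁ - σ s y₁) = φ' l := by
    rw [hd]; simp only [φ]; simp; ring
  have e2 : φ' l = σx t (y₂ + l * (x₂ - y₂)) * ((x₂ - y₂) - (x₁ - y₁)) +
      (σx t (y₂ + l * (x₂ - y₂)) - σx s (y₁ + l * (x₁ - y₁))) * (x₁ - y₁) := by
    simp only [φ']; ring
  rw [e, e2]
  refine (abs_add_le _ _).trans ?_
  rw [abs_mul, abs_mul]
  have h3 : |σx t (y₂ + l * (x₂ - y₂)) - σx s (y₁ + l * (x₁ - y₁))| ≤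
      S * (|t - s| + |x₂ - x₁| + |y₂ - y₁|) := by
    refine (hσx _ _ _ _).trans ?_
    rw [add_assoc]
    gcongr
    have : y₂ + l * (x₂ - y₂) - (y₁ + l * (x₁ - y₁)) =
        l * (x₂ - x₁) + (1 - l) * (y₂ - y₁) := by ring
    rw [this]
    refine (abs_add_le _ _).trans ?_
    rw [abs_mul, abs_mul, abs_of_pos hl.1, abs_of_pos (sub_pos.2 hl.2)]
    nlinarith [abs_nonneg (x₂ - x₁), abs_nonneg (y₂ - y₁), hl.1, hl.2]
  gcongr
  exact hbd _ _


lemma exists_small_rpow {γ η : ℝ} (hγ : 0 < γ) (hη : 0 < η) :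
    ∃ h : ℝ, 0 < h ∧ h ≤ 1 ∧ h ^ γ ≤ η := by
  refine ⟨min 1 (η ^ (γ⁻¹)), lt_min one_pos (by positivity), min_le_left _ _, ?_⟩
  calc (min 1 (η ^ (γ⁻¹))) ^ γ ≤ (η ^ (γ⁻¹)) ^ γ :=
        Real.rpow_le_rpow (by positivity) (min_le_right _ _) hγ.le
    _ = η := Real.rpow_inv_rpow hη.le hγ.ne'

lemma det_unique (b σ σx : ℝ → ℝ → ℝ) (g x y : ℝ → ℝ) (z T γ B S L D : ℝ) (hT : 0 < T)
    (hγ : 1 / 2 < γ) (hγ1 : γ ≤ 1) (hL : 0 ≤ L) (hD : 0 ≤ D)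
    (hb : ∀ t₁ x₁ t₂ x₂ : ℝ, |b t₂ x₂ - b t₁ x₁| ≤ B * (|t₂ - t₁| + |x₂ - x₁|))
    (hσdx : ∀ t x : ℝ, HasDerivAt (fun y => σ t y) (σx t x) x)
    (hσ : ∀ t₁ x₁ t₂ x₂ : ℝ, |σ t₂ x₂ - σ t₁ x₁| ≤ S * (|t₂ - t₁| + |x₂ - x₁|))
    (hσx : ∀ t₁ x₁ t₂ x₂ : ℝ, |σx t₂ x₂ - σx t₁ x₁| ≤ S * (|t₂ - t₁| + |x₂ - x₁|))
    (hg : HolD g L γ 0 T) (hx : HolD x D γ 0 T) (hy : HolD y D γ 0 T)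
    (hxs : DetSol b σ g z T x) (hys : DetSol b σ g z T y) : EqOn x y (Icc 0 T) := by
  have hB := lip_const_nonneg hb
  have hS := lip_const_nonneg hσ
  have hγ0 : 0 < γ := by linarith
  have hθ : 1 < γ + γ := by linarith
  set Q := 2 / (1 - (2 : ℝ) ^ (1 - (γ + γ))) with hQ
  have hQ0 : 0 ≤ Q := by
    have := two_rpow_aux hθ
    exact div_nonneg (by norm_num) (by linarith)
  set W := B + S * L + Q * (S * (2 + 2 * D) * L) with hW
  have hW0 : 0 ≤ W := by positivity
  obtain ⟨h, hh0, hh1, hhη⟩ := exists_small_rpow (γ := γ) (η := 1 / (2 * (W + 1))) hγ0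
    (by positivity)
  have hWh : W * h ^ γ ≤ 1 / 2 := by
    have h1 : W * h ^ γ ≤ W * (1 / (2 * (W + 1))) := by gcongr
    refine h1.trans ?_
    rw [mul_one_div, div_le_div_iff₀ (by positivity) (by norm_num)]
    linarith
  -- local uniqueness
  have loc : ∀ a c, 0 ≤ a → a ≤ c → c ≤ T → c - a ≤ h → x a = y a →
      ∀ t ∈ Icc a c, x t = y t := by
    intro a c ha hac hcT hcah hxy
    have hsubT : ∀ p ∈ Icc a c, p ∈ Icc 0 T := fun p hp => ⟨ha.trans hp.1, hp.2.trans hcT⟩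
    have improve : ∀ m, 0 ≤ m → HolD (fun t => x t - y t) m γ a c →
        HolD (fun t => x t - y t) (m / 2) γ a c := by
      intro m hm hz
      have hzb : ∀ r ∈ Icc a c, |x r - y r| ≤ m * h ^ γ := by
        intro r hr
        have h1 := hz a ⟨le_rfl, hac⟩ r hr
        simp only [hxy, sub_self, sub_zero] at h1
        refine h1.trans ?_
        rw [abs_of_nonneg (sub_nonneg.2 hr.1)]
        have := Real.rpow_le_rpow (sub_nonneg.2 hr.1) (by linarith [hr.2] : r - a ≤ h) hγ0.le
        gcongr
      have hhγ1 : h ^ γ ≤ 1 := Real.rpow_le_one hh0.le hh1 hγ0.le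
      have hD1 : HolD (fun τ => σ τ (x τ) - σ τ (y τ)) (S * m * (2 + 2 * D)) γ a c := by
        intro s hs t ht
        have f4 := four_point σ σx S hσdx hσ hσx s t (x s) (y s) (x t) (y t)
        have z1 := hz s hs t ht
        have x1 := hx s (hsubT s hs) t (hsubT t ht)
        have y1 := hy s (hsubT s hs) t (hsubT t ht)
        have z2 := (hzb s hs).trans (mul_le_of_le_one_right hm hhγ1)
        have d1 : |t - s| ≤ |t - s| ^ γ := by
          have := rpow_split_one (T := 1) (abs_nonneg (t - s)) (by
            rw [abs_le]; constructor <;> linarith [hs.1, hs.2, ht.1, ht.2]) hγ0.le hγ1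
          simpa using this
        refine f4.trans ?_
        calc _ ≤ S * (m * |t - s| ^ γ) +
              S * (|t - s| ^ γ + D * |t - s| ^ γ + D * |t - s| ^ γ) * m := by gcongr
          _ ≤ _ := by
            have : 0 ≤ S * (m * |t - s| ^ γ) := by positivity
            nlinarith
      apply HolD.of_le
      intro s hs t ht hst
      obtain ⟨I₁, r1, e1⟩ := hxs s (hsubT s hs)
      obtain ⟨I₂, r2, e2⟩ := hxs t (hsubT t ht)
      obtain ⟨J₁, r1', e1'⟩ := hys s (hsubT s hs)
      obtain ⟨J₂, r2', e2'⟩ := hys t (hsubT t ht)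
      have hs0 := ha.trans hs.1
      have hsub : ∀ p ∈ Icc s t, p ∈ Icc a c := fun p hp => ⟨hs.1.trans hp.1, hp.2.trans ht.2⟩
      have Y := young_est (fun τ => σ τ (x τ) - σ τ (y τ)) g γ γ (S * m * (2 + 2 * D)) L s t
        (I₁ - J₁) (I₂ - J₂) hγ0 hγ0 hθ hs0 hst (by positivity) hL
        (fun p hp r hr => hD1 p (hsub p hp) r (hsub r hr))
        (fun p hp r hr => hg p (hsubT p (hsub p hp)) r (hsubT r (hsub r hr)))
        (r1.sub r1') (r2.sub r2')
      have hcx := (HolD.comp_lip hB hγ0.le hγ1 hb hx).continuousOn hγ0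
      have hcy := (HolD.comp_lip hB hγ0.le hγ1 hb hy).continuousOn hγ0
      have z0 : (0 : ℝ) ∈ Icc 0 T := ⟨le_rfl, hT.le⟩
      have hintx : (∫ τ in (0 : ℝ)..t, b τ (x τ)) - (∫ τ in (0 : ℝ)..s, b τ (x τ)) =
          ∫ τ in s..t, b τ (x τ) :=
        intervalIntegral.integral_interval_sub_left
          (intble_of_contOn hcx z0 (hsubT t ht)) (intble_of_contOn hcx z0 (hsubT s hs))
      have hinty : (∫ τ in (0 : ℝ)..t, b τ (y τ)) - (∫ τ in (0 : ℝ)..s, b τ (y τ)) =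
          ∫ τ in s..t, b τ (y τ) :=
        intervalIntegral.integral_interval_sub_left
          (intble_of_contOn hcy z0 (hsubT t ht)) (intble_of_contOn hcy z0 (hsubT s hs))
      have hints : (∫ τ in s..t, b τ (x τ)) - (∫ τ in s..t, b τ (y τ)) =
          ∫ τ in s..t, (b τ (x τ) - b τ (y τ)) :=
        (intervalIntegral.integral_sub
          (intble_of_contOn hcx (hsubT s hs) (hsubT t ht))
          (intble_of_contOn hcy (hsubT s hs) (hsubT t ht))).symm
      have hib := integral_bound (f := fun τ => b τ (x τ) - b τ (y τ)) (M := B * (m * h ^ γ)) hst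
        (fun r hr => by
          have h1 := hb r (y r) r (x r)
          simp only [sub_self, abs_zero, zero_add] at h1
          exact h1.trans (mul_le_mul_of_nonneg_left (hzb r (hsub r hr)) hB))
      have hd : 0 ≤ t - s := sub_nonneg.2 hst
      have hdh : t - s ≤ h := by linarith [hs.1, ht.2]
      have k1 : t - s ≤ (t - s) ^ γ := by
        have := rpow_split_one (T := 1) hd (hdh.trans hh1) hγ0.le hγ1
        simpa using this
      have k2 := rpow_split hd hdh hγ0.le hγ0.le
      have hgs := hg s (hsubT s hs) t (hsubT t ht)
      rw [abs_of_nonneg hd] at hgs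
      have hσs : |σ s (x s) - σ s (y s)| ≤ S * (m * h ^ γ) := by
        have h1 := hσ s (y s) s (x s)
        simp only [sub_self, abs_zero, zero_add] at h1
        exact h1.trans (mul_le_mul_of_nonneg_left (hzb s hs) hS)
      have ex : (x t - y t) - (x s - y s) = (∫ τ in s..t, (b τ (x τ) - b τ (y τ))) +
          (σ s (x s) - σ s (y s)) * (g t - g s) +
          (I₂ - J₂ - (I₁ - J₁) - (σ s (x s) - σ s (y s)) * (g t - g s)) := by
        rw [e1, e2, e1', e2', ← hints, ← hintx, ← hinty]; ring
      have hdγ : 0 ≤ (t - s) ^ γ := Real.rpow_nonneg hd γ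
      show |(x t - y t) - (x s - y s)| ≤ _
      rw [ex]
      refine (abs_add_le _ _).trans ((add_le_add_left (abs_add_le _ _) _).trans ?_)
      rw [abs_mul]
      calc _ ≤ B * (m * h ^ γ) * (t - s) + S * (m * h ^ γ) * (L * (t - s) ^ γ) +
            Q * (S * m * (2 + 2 * D) * L) * (t - s) ^ (γ + γ) := by gcongr
        _ ≤ B * (m * h ^ γ) * (t - s) ^ γ + S * (m * h ^ γ) * (L * (t - s) ^ γ) +
            Q * (S * m * (2 + 2 * D) * L) * (h ^ γ * (t - s) ^ γ) := by gcongr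
        _ = (W * h ^ γ) * (m * (t - s) ^ γ) := by rw [hW]; ring
        _ ≤ 1 / 2 * (m * (t - s) ^ γ) := by gcongr
        _ = _ := by ring
    have init : HolD (fun t => x t - y t) (2 * D) γ a c := by
      intro s hs t ht
      have x1 := hx s (hsubT s hs) t (hsubT t ht)
      have y1 := hy s (hsubT s hs) t (hsubT t ht)
      have : x t - y t - (x s - y s) = (x t - x s) - (y t - y s) := by ring
      simp only [this]
      refine (abs_sub _ _).trans ?_
      linarith
    have all : ∀ n : ℕ, HolD (fun t => x t - y t) (2 * D / 2 ^ n) γ a c := by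
      intro n
      induction n with
      | zero => simpa using init
      | succ n ih =>
        have := improve _ (by positivity) ih
        rw [pow_succ, ← div_div]; exact this
    intro t ht
    have lim : Filter.Tendsto (fun n : ℕ => 2 * D / 2 ^ n * |t - a| ^ γ) Filter.atTop
        (nhds 0) := by
      have h1 : Filter.Tendsto (fun n : ℕ => ((1 : ℝ) / 2) ^ n) Filter.atTop (nhds 0) :=
        tendsto_pow_atTop_nhds_zero_of_lt_one (by norm_num) (by norm_num)
      have h2 := (h1.const_mul (2 * D)).mul_const (|t - a| ^ γ)
      simp only [mul_zero, zero_mul] at h2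
      refine h2.congr fun n => ?_
      rw [one_div, inv_pow, div_eq_mul_inv]
    have := ge_of_tendsto' lim fun n => all n a ⟨le_rfl, hac⟩ t ht
    simp only [hxy, sub_self, sub_zero] at this
    exact sub_eq_zero.1 (abs_nonpos_iff.1 this)
  have step : ∀ n : ℕ, ∀ t ∈ Icc (0 : ℝ) T, t ≤ n * h → x t = y t := by
    intro n
    induction n with
    | zero =>
      intro t ht htn
      have : t = 0 := le_antisymm (by simpa using htn) ht.1
      subst this
      obtain ⟨I, r, e⟩ := hxs 0 ht
      obtain ⟨J, r', e'⟩ := hys 0 ht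
      rw [e, e', r.self_eq_zero, r'.self_eq_zero]; simp
    | succ n ih =>
      intro t ht htn
      rcases le_total t (n * h) with hle | hle
      · exact ih t ht hle
      · have hnh : (0 : ℝ) ≤ n * h := by positivity
        push_cast at htn
        exact loc (n * h) t hnh hle ht.2 (by linarith)
          (ih _ ⟨hnh, hle.trans ht.2⟩ le_rfl) t ⟨hle, le_rfl⟩
  intro t ht
  obtain ⟨n, hn⟩ := exists_nat_ge (t / h)
  exact step n t ht ((div_le_iff₀ hh0).1 hn)


set_option maxHeartbeats 2000000 in
/-- Uniform Davie estimate for Euler schemes. -/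
lemma euler_est (F : ℝ → ℝ → ℝ → ℝ → ℝ) (T γ P : ℝ) (hγ : 1 / 2 < γ) (hγ1 : γ ≤ 1)
    (hP : 1 ≤ P)
    (F1 : ∀ s ∈ Icc 0 T, ∀ t ∈ Icc 0 T, ∀ t' ∈ Icc 0 T, ∀ x, t ≤ t' → t' - t ≤ 1 →
      |F s x t t'| ≤ P * (1 + |x|) * (t' - t) ^ γ)
    (F2 : ∀ s ∈ Icc 0 T, ∀ s' ∈ Icc 0 T, ∀ t ∈ Icc 0 T, ∀ t' ∈ Icc 0 T, ∀ x x', t ≤ t' →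
      t' - t ≤ 1 → |F s' x' t t' - F s x t t'| ≤ P * (|s' - s| + |x' - x|) * (t' - t) ^ γ)
    (F3 : ∀ s x t t' t'', F s x t t' + F s x t' t'' = F s x t t'') :
    ∃ K h : ℝ, 0 ≤ K ∧ 0 < h ∧ h ≤ 1 ∧ ∀ (u x : ℕ → ℝ), Monotone u → (∀ k, u k ∈ Icc 0 T) →
      (∀ k, x (k + 1) = x k + F (u k) (x k) (u k) (u (k + 1))) →
      ∀ i k, i ≤ k → u k - u i ≤ h →
        |x k - x i - F (u i) (x i) (u i) (u k)| ≤ K * (1 + |x i|) * (u k - u i) ^ (γ + γ) ∧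
        1 + |x k| ≤ 2 * (1 + |x i|) := by
  have hγ0 : 0 < γ := by linarith
  have hθ : 1 < γ + γ := by linarith
  set κ := (2 : ℝ) ^ (1 - (γ + γ)) with hκ
  have hκ1 : κ < 1 := two_rpow_aux hθ
  have hκ0 : 0 < κ := by positivity
  have h1κ : 0 < 1 - κ := by linarith
  have hP0 : 0 < P := by linarith
  set ε := (1 - κ) / 3 with hε
  have hε0 : 0 < ε := by positivity
  have hε1 : ε ≤ 1 := by rw [hε]; linarith
  set Q := 2 * (P * (1 + 2 * P)) with hQ
  have hQ0 : 0 < Q := by positivity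
  set K := 2 * Q / (1 - κ) with hK
  have hK0 : 0 < K := by positivity
  have hKeq : K * (1 - κ) = 2 * Q := by rw [hK]; field_simp
  obtain ⟨h, hh0, hh1, hhη⟩ := exists_small_rpow (γ := γ) (η := min (P / K) (ε / (2 * P))) hγ0
    (lt_min (by positivity) (by positivity))
  have hKh : K * h ^ γ ≤ P := by
    have := hhη.trans (min_le_left _ _)
    rw [le_div_iff₀ hK0] at this; linarith
  have hPh : 2 * P * h ^ γ ≤ ε := by
    have := hhη.trans (min_le_right _ _)
    rw [le_div_iff₀ (by positivity)] at this; linarith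
  refine ⟨K, h, hK0.le, hh0, hh1, ?_⟩
  intro u x hu huT hx
  have F0 : ∀ s y t, F s y t t = 0 := fun s y t => by
    have := F3 s y t t t; linarith
  -- consequence of the estimate for increments
  have conseq : ∀ i k, i ≤ k → u k - u i ≤ h →
      |x k - x i - F (u i) (x i) (u i) (u k)| ≤ K * (1 + |x i|) * (u k - u i) ^ (γ + γ) →
      |x k - x i| ≤ 2 * P * (1 + |x i|) * (u k - u i) ^ γ := by
    intro i k hik hd hest
    have d0 : 0 ≤ u k - u i := sub_nonneg.2 (hu hik)
    have f1 := F1 (u i) (huT i) (u i) (huT i) (u k) (huT k) (x i) (hu hik) (hd.trans hh1)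
    have sp := rpow_split d0 hd hγ0.le hγ0.le
    have e0 : 0 ≤ (u k - u i) ^ γ := Real.rpow_nonneg d0 _
    have w0 : 0 ≤ 1 + |x i| := by positivity
    have : K * (1 + |x i|) * (u k - u i) ^ (γ + γ) ≤ P * (1 + |x i|) * (u k - u i) ^ γ := by
      calc _ ≤ K * (1 + |x i|) * (h ^ γ * (u k - u i) ^ γ) := by gcongr
        _ = (K * h ^ γ) * ((1 + |x i|) * (u k - u i) ^ γ) := by ring
        _ ≤ P * ((1 + |x i|) * (u k - u i) ^ γ) := by gcongr
        _ = _ := by ring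
    have e : x k - x i = (x k - x i - F (u i) (x i) (u i) (u k)) + F (u i) (x i) (u i) (u k) := by
      ring
    rw [e]
    refine (abs_add_le _ _).trans ?_
    linarith
  have conseq2 : ∀ i k, u k - u i ≤ h → i ≤ k →
      |x k - x i| ≤ 2 * P * (1 + |x i|) * (u k - u i) ^ γ → |x k| ≤ |x i| + ε * (1 + |x i|) := by
    intro i k hd hik hest
    have d0 : 0 ≤ u k - u i := sub_nonneg.2 (hu hik)
    have := Real.rpow_le_rpow d0 hd hγ0.le
    have w0 : 0 ≤ 1 + |x i| := by positivity
    have h2 : 2 * P * (1 + |x i|) * (u k - u i) ^ γ ≤ ε * (1 + |x i|) := by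
      calc _ ≤ 2 * P * (1 + |x i|) * h ^ γ := by gcongr
        _ = (2 * P * h ^ γ) * (1 + |x i|) := by ring
        _ ≤ _ := by gcongr
    have h3 : |x k| ≤ |x i| + |x k - x i| := by
      have := abs_add_le (x i) (x k - x i)
      simpa using this
    linarith
  have key : ∀ n i k, k - i = n → i ≤ k → u k - u i ≤ h →
      |x k - x i - F (u i) (x i) (u i) (u k)| ≤ K * (1 + |x i|) * (u k - u i) ^ (γ + γ) := by
    intro n
    induction n using Nat.strong_induction_on with
    | _ n ih =>
      intro i k hn hik hdh
      have hd : 0 ≤ u k - u i := sub_nonneg.2 (hu hik)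
      have hw : 1 ≤ 1 + |x i| := by linarith [abs_nonneg (x i)]
      rcases hik.eq_or_lt with rfl | hlt
      · rw [F0]; simp; positivity
      obtain ⟨m, him, hmk, h1, h2⟩ := bisect_index u hu i k hlt
      have hm1 : 0 ≤ u m - u i := sub_nonneg.2 (hu him)
      have hm2 : 0 ≤ u k - u (m + 1) := sub_nonneg.2 (hu hmk)
      have hm3 : 0 ≤ u (m + 1) - u m := sub_nonneg.2 (hu (Nat.le_succ m))
      set w := 1 + |x i| with hwdef
      set d := u k - u i with hddef
      set e := d ^ γ with he
      have he0 : 0 ≤ e := Real.rpow_nonneg hd _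
      have hde : d ≤ e := by
        have := rpow_split_one (T := 1) hd (hdh.trans hh1) hγ0.le hγ1
        simpa using this
      have hee : d ^ (γ + γ) = e * e := Real.rpow_add_of_nonneg hd hγ0.le hγ0.le
      have a1 := ih (m - i) (by omega) i m rfl him (by linarith)
      have a2 := ih (k - (m + 1)) (by omega) (m + 1) k rfl (by omega) (by linarith)
      have x1 := conseq i m him (by linarith) a1
      have w1 := conseq2 i m (by linarith) him x1
      -- one Euler step
      have s1 : |x (m + 1) - x m| ≤ P * (1 + |x m|) * (u (m + 1) - u m) ^ γ := by
        have := F1 (u m) (huT m) (u m) (huT m) (u (m + 1)) (huT _) (x m) (hu (Nat.le_succ m))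
          (by linarith)
        rw [hx m, add_sub_cancel_left]; exact this
      have s1' : |x (m + 1) - x m| ≤ 2 * P * (1 + |x m|) * (u (m + 1) - u m) ^ γ := by
        refine s1.trans ?_
        have : 0 ≤ P * (1 + |x m|) * (u (m + 1) - u m) ^ γ :=
          mul_nonneg (by positivity) (Real.rpow_nonneg hm3 _)
        linarith
      have w2 := conseq2 m (m + 1) (by linarith) (Nat.le_succ m) s1'
      have g1 : (u m - u i) ^ γ ≤ e := Real.rpow_le_rpow hm1 (by linarith) hγ0.le
      have g2 : (u (m + 1) - u m) ^ γ ≤ e := Real.rpow_le_rpow hm3 (by linarith) hγ0.le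
      have x1' : |x m - x i| ≤ 2 * P * w * e := by
        refine x1.trans ?_; gcongr
      have wm : 1 + |x m| ≤ 2 * w := by
        have : ε * w ≤ 1 * w := by gcongr
        linarith
      have s1'' : |x (m + 1) - x m| ≤ 2 * P * w * e := by
        refine s1.trans ?_
        calc _ ≤ P * (2 * w) * e := by gcongr
          _ = _ := by ring
      have wm1 : 1 + |x (m + 1)| ≤ (1 + 3 * ε) * w := by
        have q1 : 1 + |x (m + 1)| ≤ (1 + ε) * (1 + |x m|) := by linarith
        have q2 : 1 + |x m| ≤ (1 + ε) * w := by linarith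
        have q3 : (1 + ε) * (1 + |x m|) ≤ (1 + ε) * ((1 + ε) * w) := by gcongr
        have q4 : ε * ε ≤ ε * 1 := by gcongr
        nlinarith
      -- the two defects
      have D1 : |F (u m) (x m) (u m) (u k) - F (u i) (x i) (u m) (u k)| ≤
          P * (1 + 2 * P) * w * (e * e) := by
        refine (F2 (u i) (huT i) (u m) (huT m) (u m) (huT m) (u k) (huT k) (x i) (x m)
          (hu hmk.le) (by linarith)).trans ?_
        have o : (u k - u m) ^ γ ≤ e :=
          Real.rpow_le_rpow (sub_nonneg.2 (hu hmk.le)) (by linarith) hγ0.le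
        have o1 : |u m - u i| ≤ w * e := by
          rw [abs_of_nonneg hm1]; nlinarith
        calc _ ≤ P * (w * e + 2 * P * w * e) * e := by
              have : 0 ≤ (u k - u m) ^ γ := Real.rpow_nonneg (sub_nonneg.2 (hu hmk.le)) _
              gcongr
          _ = _ := by ring
      have D2 : |F (u (m + 1)) (x (m + 1)) (u (m + 1)) (u k) - F (u m) (x m) (u (m + 1)) (u k)| ≤
          P * (1 + 2 * P) * w * (e * e) := by
        refine (F2 (u m) (huT m) (u (m + 1)) (huT _) (u (m + 1)) (huT _) (u k) (huT k) (x m)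
          (x (m + 1)) (hu hmk) (by linarith)).trans ?_
        have o : (u k - u (m + 1)) ^ γ ≤ e := Real.rpow_le_rpow hm2 (by linarith) hγ0.le
        have o1 : |u (m + 1) - u m| ≤ w * e := by
          rw [abs_of_nonneg hm3]; nlinarith
        calc _ ≤ P * (w * e + 2 * P * w * e) * e := by
              have : 0 ≤ (u k - u (m + 1)) ^ γ := Real.rpow_nonneg hm2 _
              gcongr
          _ = _ := by ring
      have c1 : (u m - u i) ^ (γ + γ) ≤ (d / 2) ^ (γ + γ) :=
        Real.rpow_le_rpow hm1 h1 (by linarith)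
      have c2 : (u k - u (m + 1)) ^ (γ + γ) ≤ (d / 2) ^ (γ + γ) :=
        Real.rpow_le_rpow hm2 h2 (by linarith)
      have hh := half_rpow_aux (θ := γ + γ) hd
      rw [hee, ← hκ] at hh
      have c0 : (d / 2) ^ (γ + γ) = κ / 2 * (e * e) := by linarith
      have A1 : |x m - x i - F (u i) (x i) (u i) (u m)| ≤ K * w * (κ / 2 * (e * e)) := by
        rw [← c0]; refine a1.trans ?_; gcongr
      have A2 : |x k - x (m + 1) - F (u (m + 1)) (x (m + 1)) (u (m + 1)) (u k)| ≤
          K * ((1 + 3 * ε) * w) * (κ / 2 * (e * e)) := by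
        rw [← c0]; refine a2.trans ?_
        have : 0 ≤ (u k - u (m + 1)) ^ (γ + γ) := Real.rpow_nonneg hm2 _
        gcongr
      have tot : K * w * (κ / 2 * (e * e)) + K * ((1 + 3 * ε) * w) * (κ / 2 * (e * e)) +
          2 * (P * (1 + 2 * P) * w * (e * e)) ≤ K * w * (e * e) := by
        have q : K * κ / 2 + K * (1 + 3 * ε) * κ / 2 + Q ≤ K := by
          have : 3 * ε = 1 - κ := by rw [hε]; ring
          rw [this]
          have : 0 ≤ K * (1 - κ) * (1 - κ) := by positivity
          nlinarith
        have : 0 ≤ w * (e * e) := by positivity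
        have := mul_le_mul_of_nonneg_right q this
        calc _ = (K * κ / 2 + K * (1 + 3 * ε) * κ / 2 + Q) * (w * (e * e)) := by rw [hQ]; ring
          _ ≤ _ := this
          _ = _ := by ring
      rw [hee]
      refine le_trans ?_ tot
      have dec : x k - x i - F (u i) (x i) (u i) (u k) =
          (x m - x i - F (u i) (x i) (u i) (u m)) +
          (x k - x (m + 1) - F (u (m + 1)) (x (m + 1)) (u (m + 1)) (u k)) +
          ((F (u m) (x m) (u m) (u k) - F (u i) (x i) (u m) (u k)) +
          (F (u (m + 1)) (x (m + 1)) (u (m + 1)) (u k) - F (u m) (x m) (u (m + 1)) (u k))) := by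
        have t1 := F3 (u i) (x i) (u i) (u m) (u k)
        have t2 := F3 (u m) (x m) (u m) (u (m + 1)) (u k)
        have t3 := hx m
        linarith
      rw [dec]
      refine (abs_add_le _ _).trans ?_
      have v1 := abs_add_le (x m - x i - F (u i) (x i) (u i) (u m))
        (x k - x (m + 1) - F (u (m + 1)) (x (m + 1)) (u (m + 1)) (u k))
      have v2 := abs_add_le (F (u m) (x m) (u m) (u k) - F (u i) (x i) (u m) (u k))
        (F (u (m + 1)) (x (m + 1)) (u (m + 1)) (u k) - F (u m) (x m) (u (m + 1)) (u k))
      linarith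
  intro i k hik hd
  have a := key _ i k rfl hik hd
  refine ⟨a, ?_⟩
  have := conseq2 i k hd hik (conseq i k hik hd a)
  have h2 : ε * (1 + |x i|) ≤ 1 * (1 + |x i|) := by gcongr
  linarith


/-- The Euler scheme on a given grid. -/
def eulerSeq (F : ℝ → ℝ → ℝ → ℝ → ℝ) (z : ℝ) (u : ℕ → ℝ) : ℕ → ℝ
  | 0 => z
  | k + 1 => eulerSeq F z u k + F (u k) (eulerSeq F z u k) (u k) (u (k + 1))

/-- Existence of a Davie-type solution. -/
lemma davie_exists (F : ℝ → ℝ → ℝ → ℝ → ℝ) (T γ P z : ℝ) (hT : 0 < T)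
    (hγ : 1 / 2 < γ) (hγ1 : γ ≤ 1) (hP : 1 ≤ P)
    (Fc : Continuous fun p : ℝ × ℝ × ℝ × ℝ => F p.1 p.2.1 p.2.2.1 p.2.2.2)
    (F1 : ∀ s ∈ Icc 0 T, ∀ t ∈ Icc 0 T, ∀ t' ∈ Icc 0 T, ∀ x, t ≤ t' → t' - t ≤ 1 →
      |F s x t t'| ≤ P * (1 + |x|) * (t' - t) ^ γ)
    (F2 : ∀ s ∈ Icc 0 T, ∀ s' ∈ Icc 0 T, ∀ t ∈ Icc 0 T, ∀ t' ∈ Icc 0 T, ∀ x x', t ≤ t' →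
      t' - t ≤ 1 → |F s' x' t t' - F s x t t'| ≤ P * (|s' - s| + |x' - x|) * (t' - t) ^ γ)
    (F3 : ∀ s x t t' t'', F s x t t' + F s x t' t'' = F s x t t'') :
    ∃ (x : ℝ → ℝ) (K h M : ℝ), 0 ≤ K ∧ 0 < h ∧ h ≤ 1 ∧ 0 ≤ M ∧ x 0 = z ∧
      (∀ t ∈ Icc 0 T, |x t| ≤ M) ∧
      ∀ s ∈ Icc 0 T, ∀ t ∈ Icc 0 T, s ≤ t → t - s < h →
        |x t - x s - F s (x s) s t| ≤ K * (t - s) ^ (γ + γ) := by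
  obtain ⟨K, h, hK0, hh0, hh1, H⟩ := euler_est F T γ P hγ hγ1 hP F1 F2 F3
  let δ : ℕ → ℝ := fun n => T / ((n : ℝ) + 1)
  have hδ0 : ∀ n, 0 < δ n := fun n => by positivity
  have hδlim : Filter.Tendsto δ Filter.atTop (nhds 0) := by
    have := (tendsto_one_div_add_atTop_nhds_zero_nat (𝕜 := ℝ)).const_mul T
    simpa [δ, div_eq_mul_inv] using this
  let u : ℕ → ℕ → ℝ := fun n k => min (k * δ n) T
  have humono : ∀ n, Monotone (u n) := by
    intro n i j hij
    have : (i : ℝ) ≤ j := by exact_mod_cast hij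
    have := mul_le_mul_of_nonneg_right this (hδ0 n).le
    exact min_le_min_right T this
  have huT : ∀ n k, u n k ∈ Icc 0 T := fun n k =>
    ⟨le_min (mul_nonneg (Nat.cast_nonneg k) (hδ0 n).le) hT.le, min_le_right _ _⟩
  have hu0 : ∀ n, u n 0 = 0 := fun n => by simp [u, hT.le]
  have hustep : ∀ n k, u n (k + 1) ≤ u n k + δ n := by
    intro n k
    simp only [u]
    push_cast
    rcases le_total ((k : ℝ) * δ n) T with h1 | h1
    · rw [min_eq_left h1]; exact (min_le_left _ _).trans (by linarith)
    · rw [min_eq_right h1]; exact (min_le_right _ _).trans (by linarith [hδ0 n])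
  let X : ℕ → ℕ → ℝ := fun n => eulerSeq F z (u n)
  have HX : ∀ n i k, i ≤ k → u n k - u n i ≤ h →
        |X n k - X n i - F (u n i) (X n i) (u n i) (u n k)| ≤
          K * (1 + |X n i|) * (u n k - u n i) ^ (γ + γ) ∧
        1 + |X n k| ≤ 2 * (1 + |X n i|) := fun n =>
    H (u n) (X n) (humono n) (huT n) (fun k => rfl)
  obtain ⟨p0, hp0⟩ := exists_nat_ge (T / (h / 2))
  have hp0' : T ≤ p0 * (h / 2) := (div_le_iff₀ (by positivity)).1 hp0
  set M := (2 : ℝ) ^ p0 * (1 + |z|) with hM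
  have hM0 : 0 ≤ M := by positivity
  have hbdd : ∀ n, δ n ≤ h / 2 → ∀ j, |X n j| ≤ M := by
    intro n hn
    have claim : ∀ p : ℕ, ∀ j, u n j ≤ p * (h / 2) → 1 + |X n j| ≤ 2 ^ p * (1 + |z|) := by
      intro p
      induction p with
      | zero =>
        intro j hj
        have e : u n j = u n 0 := by
          rw [hu0]; exact le_antisymm (by simpa using hj) (huT n j).1
        have a := HX n 0 j (Nat.zero_le j) (by rw [e]; linarith)
        have a1 := a.1
        rw [e] at a1
        have f0 : F (u n 0) (X n 0) (u n 0) (u n 0) = 0 := by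
          have := F3 (u n 0) (X n 0) (u n 0) (u n 0) (u n 0); linarith
        rw [f0, sub_self, Real.zero_rpow (by linarith), mul_zero, sub_zero] at a1
        have e2 := sub_eq_zero.1 (abs_nonpos_iff.1 a1)
        rw [e2]
        have : X n 0 = z := rfl
        rw [this]; simp
      | succ p ih =>
        intro j hj
        classical
        let q : ℕ → Prop := fun i => u n i ≤ p * (h / 2)
        have hq : q (Nat.findGreatest q j) := by
          apply Nat.findGreatest_spec (P := q) (Nat.zero_le j)
          simp only [q, hu0]; positivity
        have hle : Nat.findGreatest q j ≤ j := Nat.findGreatest_le j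
        rcases hle.eq_or_lt with he | hlt
        · rw [he] at hq
          refine (ih j hq).trans ?_
          rw [pow_succ]
          have : 0 ≤ 2 ^ p * (1 + |z|) := by positivity
          linarith
        · have ng := Nat.findGreatest_is_greatest (P := q) (Nat.lt_succ_self _) hlt
          simp only [q, not_le] at ng
          have st := hustep n (Nat.findGreatest q j)
          simp only [Nat.succ_eq_add_one] at ng
          push_cast at hj
          have := (HX n (Nat.findGreatest q j) j hle (by linarith)).2
          have i2 := ih _ hq
          rw [pow_succ]
          linarith
    intro j
    have := claim p0 j ((huT n j).2.trans hp0')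
    linarith
  -- indices
  let k : ℕ → ℝ → ℕ := fun n t => ⌊t / δ n⌋₊
  have hk : ∀ n, ∀ t ∈ Icc 0 T, u n (k n t) ≤ t ∧ t - δ n ≤ u n (k n t) := by
    intro n t ht
    have h1 := Nat.floor_le (div_nonneg ht.1 (hδ0 n).le)
    have h2 := Nat.lt_floor_add_one (t / δ n)
    rw [le_div_iff₀ (hδ0 n)] at h1
    rw [div_lt_iff₀ (hδ0 n)] at h2
    have : u n (k n t) = (⌊t / δ n⌋₊ : ℝ) * δ n := min_eq_left (h1.trans ht.2)
    rw [this]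
    exact ⟨h1, by linarith⟩
  have hklim : ∀ t ∈ Icc 0 T, Filter.Tendsto (fun n => u n (k n t)) Filter.atTop (nhds t) := by
    intro t ht
    have hlow : Filter.Tendsto (fun n => t - δ n) Filter.atTop (nhds t) := by
      simpa using (tendsto_const_nhds (x := t)).sub hδlim
    exact tendsto_of_tendsto_of_tendsto_of_le_of_le hlow tendsto_const_nhds
      (fun n => (hk n t ht).2) (fun n => (hk n t ht).1)
  have hkmono : ∀ n s t, s ≤ t → k n s ≤ k n t := fun n s t hst =>
    Nat.floor_mono (div_le_div_of_nonneg_right hst (hδ0 n).le)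
  let U : Ultrafilter ℕ := Filter.hyperfilter ℕ
  have hU : (U : Filter ℕ) ≤ Filter.atTop := Nat.hyperfilter_le_atTop
  have hδev : ∀ᶠ n in (U : Filter ℕ), δ n ≤ h / 2 :=
    hU ((hδlim.eventually_lt_const (by positivity : (0 : ℝ) < h / 2)).mono fun n hn => hn.le)
  have hlim : ∀ t, ∃ y, |y| ≤ M ∧
      Filter.Tendsto (fun n => X n (k n t)) (U : Filter ℕ) (nhds y) := by
    intro t
    obtain ⟨y, hy, hle⟩ := (isCompact_Icc (a := -M) (b := M)).ultrafilter_le_nhds'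
      (U.map fun n => X n (k n t)) (by
        rw [Ultrafilter.mem_map]
        filter_upwards [hδev] with n hn
        exact abs_le.1 (hbdd n hn _))
    exact ⟨y, abs_le.2 hy, hle⟩
  choose x hxM hxlim using hlim
  refine ⟨x, K * (1 + M), h, M, by positivity, hh0, hh1, hM0, ?_, fun t _ => hxM t, ?_⟩
  · have h0 := hxlim 0
    have : (fun n => X n (k n 0)) = fun _ => z := by
      funext n
      have : k n 0 = 0 := by simp [k]
      rw [this]; rfl
    rw [this] at h0
    exact tendsto_nhds_unique h0 tendsto_const_nhds
  · intro s hs t ht hst hlt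
    have us := (hklim s hs).mono_left hU
    have ut := (hklim t ht).mono_left hU
    have Flim : Filter.Tendsto (fun n => F (u n (k n s)) (X n (k n s)) (u n (k n s)) (u n (k n t)))
        (U : Filter ℕ) (nhds (F s (x s) s t)) := by
      have := (Fc.tendsto (s, x s, s, t)).comp
        (us.prodMk_nhds ((hxlim s).prodMk_nhds (us.prodMk_nhds ut)))
      exact this
    have lhs := ((((hxlim t).sub (hxlim s)).sub Flim)).abs
    have rhs : Filter.Tendsto (fun n => K * (1 + M) * (u n (k n t) - u n (k n s)) ^ (γ + γ))
        (U : Filter ℕ) (nhds (K * (1 + M) * (t - s) ^ (γ + γ))) := by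
      apply Filter.Tendsto.const_mul
      exact (ut.sub us).rpow_const (Or.inr (by linarith))
    refine le_of_tendsto_of_tendsto lhs rhs ?_
    filter_upwards [hδev, (ut.sub us).eventually_lt_const hlt] with n hn hn2
    have a := (HX n (k n s) (k n t) (hkmono n s t hst) hn2.le).1
    refine a.trans ?_
    have b1 := hbdd n hn (k n s)
    have b2 : 0 ≤ (u n (k n t) - u n (k n s)) ^ (γ + γ) :=
      Real.rpow_nonneg (sub_nonneg.2 (humono n (hkmono n s t hst))) _
    gcongr

/-- A local estimate of order `θ > 1` identifies the Riemann–Stieltjes integral. -/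
lemma rs_of_davie (f g y : ℝ → ℝ) (t K θ h : ℝ) (ht : 0 ≤ t) (hθ : 1 < θ) (hK : 0 ≤ K)
    (hh : 0 < h)
    (H : ∀ s ∈ Icc 0 t, ∀ r ∈ Icc 0 t, s ≤ r → r - s < h →
      |y r - y s - f s * (g r - g s)| ≤ K * (r - s) ^ θ) :
    IsRSIntegral f g 0 t (y t - y 0) := by
  intro ε hε
  obtain ⟨η, hη0, -, hη⟩ := exists_small_rpow (γ := θ - 1) (η := ε / (2 * (K * t + 1)))
    (by linarith) (by positivity)
  refine ⟨min h η, lt_min hh hη0, fun n τ hm h0 hl hd => ?_⟩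
  have hmem : ∀ i, τ i ∈ Icc 0 t := fun i =>
    ⟨h0 ▸ hm (Fin.zero_le i), hl ▸ hm (Fin.le_last i)⟩
  have tele : ∀ (φ : ℝ → ℝ), ∑ i : Fin n, (φ (τ i.succ) - φ (τ i.castSucc)) = φ t - φ 0 := by
    intro φ
    rw [← h0, ← hl, Finset.sum_sub_distrib]
    have a := Fin.sum_univ_succ (fun i => φ (τ i))
    have b := Fin.sum_univ_castSucc (fun i => φ (τ i))
    linarith
  have e : y t - y 0 - RSsum f g n τ = ∑ i : Fin n, (y (τ i.succ) - y (τ i.castSucc) -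
      f (τ i.castSucc) * (g (τ i.succ) - g (τ i.castSucc))) := by
    rw [Finset.sum_sub_distrib, tele y]; rfl
  rw [abs_sub_comm, e]
  have hb : ∀ i : Fin n, |y (τ i.succ) - y (τ i.castSucc) -
      f (τ i.castSucc) * (g (τ i.succ) - g (τ i.castSucc))| ≤
      K * η ^ (θ - 1) * (τ i.succ - τ i.castSucc) := by
    intro i
    have le : τ i.castSucc ≤ τ i.succ := hm (Fin.castSucc_lt_succ).le
    have a := H _ (hmem i.castSucc) _ (hmem i.succ) le ((hd i).trans_le (min_le_left _ _))
    refine a.trans ?_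
    have sp := rpow_split (p := θ - 1) (q := 1) (sub_nonneg.2 le)
      ((hd i).le.trans (min_le_right _ _)) (by linarith) zero_le_one
    rw [sub_add_cancel, Real.rpow_one] at sp
    rw [mul_assoc]
    gcongr
  calc _ ≤ ∑ i : Fin n, |y (τ i.succ) - y (τ i.castSucc) -
      f (τ i.castSucc) * (g (τ i.succ) - g (τ i.castSucc))| := Finset.abs_sum_le_sum_abs _ _
    _ ≤ ∑ i : Fin n, K * η ^ (θ - 1) * (τ i.succ - τ i.castSucc) :=
      Finset.sum_le_sum fun i _ => hb i
    _ = K * η ^ (θ - 1) * t := by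
      rw [← Finset.mul_sum]
      have := tele id
      simp only [id, sub_zero] at this
      rw [this]
    _ ≤ K * (ε / (2 * (K * t + 1))) * t := by gcongr
    _ = (K * t) / (K * t + 1) * (ε / 2) := by field_simp
    _ ≤ 1 * (ε / 2) := by
      have : (K * t) / (K * t + 1) ≤ 1 := by
        rw [div_le_one (by positivity)]; linarith
      gcongr
    _ < ε := by linarith



/-- Deterministic existence. -/
lemma det_exists (b σ : ℝ → ℝ → ℝ) (g : ℝ → ℝ) (z T γ B S L : ℝ) (hT : 0 < T)
    (hγ : 1 / 2 < γ) (hγ1 : γ ≤ 1) (hL : 0 ≤ L)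
    (hb : ∀ t₁ x₁ t₂ x₂ : ℝ, |b t₂ x₂ - b t₁ x₁| ≤ B * (|t₂ - t₁| + |x₂ - x₁|))
    (hσ : ∀ t₁ x₁ t₂ x₂ : ℝ, |σ t₂ x₂ - σ t₁ x₁| ≤ S * (|t₂ - t₁| + |x₂ - x₁|))
    (hgc : Continuous g) (hg : HolD g L γ 0 T) :
    ∃ x D, HolD x D γ 0 T ∧ DetSol b σ g z T x := by
  have hγ0 : 0 < γ := by linarith
  have hB := lip_const_nonneg hb
  have hS := lip_const_nonneg hσ
  have small : ∀ d : ℝ, 0 ≤ d → d ≤ 1 → d ≤ d ^ γ := by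
    intro d h0 h1
    have := rpow_split_one (q := γ) h0 h1 hγ0.le hγ1
    simpa using this
  have grow : ∀ (φ : ℝ → ℝ → ℝ) (A : ℝ), 0 ≤ A →
      (∀ t₁ x₁ t₂ x₂ : ℝ, |φ t₂ x₂ - φ t₁ x₁| ≤ A * (|t₂ - t₁| + |x₂ - x₁|)) →
      ∀ s ∈ Icc 0 T, ∀ x, |φ s x| ≤ (|φ 0 0| + A * T + A) * (1 + |x|) := by
    intro φ A hA hφ s hs x
    have h1 := hφ 0 0 s x
    rw [sub_zero, sub_zero, abs_of_nonneg hs.1] at h1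
    have h3 : |φ s x| ≤ |φ 0 0| + |φ s x - φ 0 0| := by
      have := abs_add_le (φ 0 0) (φ s x - φ 0 0)
      simpa using this
    have h4 : A * s ≤ A * T := mul_le_mul_of_nonneg_left hs.2 hA
    have h5 := abs_nonneg x
    have h6 : 0 ≤ (|φ 0 0| + A * T) * |x| := by positivity
    nlinarith
  let F : ℝ → ℝ → ℝ → ℝ → ℝ := fun s x t t' => σ s x * (g t' - g t) + b s x * (t' - t)
  set Ps := |σ 0 0| + S * T + S with hPs
  set Pb := |b 0 0| + B * T + B with hPb
  have hPs0 : 0 ≤ Ps := by positivity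
  have hPb0 : 0 ≤ Pb := by positivity
  have hSP : S ≤ Ps := by
    have : 0 ≤ |σ 0 0| + S * T := by positivity
    linarith
  have hBP : B ≤ Pb := by
    have : 0 ≤ |b 0 0| + B * T := by positivity
    linarith
  set P := Ps * L + Pb + 1 with hP
  have hP1 : 1 ≤ P := by
    have : 0 ≤ Ps * L := by positivity
    linarith
  have hginc : ∀ t ∈ Icc 0 T, ∀ t' ∈ Icc 0 T, t ≤ t' → |g t' - g t| ≤ L * (t' - t) ^ γ := by
    intro t ht t' ht' h
    have := hg t ht t' ht'
    rwa [abs_of_nonneg (sub_nonneg.2 h)] at this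
  have gen : ∀ (p q w t t' A : ℝ), t ∈ Icc 0 T → t' ∈ Icc 0 T → t ≤ t' → t' - t ≤ 1 → 0 ≤ A →
      |p| ≤ Ps * A → |q| ≤ Pb * A →
      |p * (g t' - g t) + q * (t' - t)| ≤ P * A * (t' - t) ^ γ := by
    intro p q w t t' A ht ht' htt h1 hA hp hq
    have a1 := hginc t ht t' ht' htt
    have a2 := small (t' - t) (sub_nonneg.2 htt) h1
    have a3 : 0 ≤ (t' - t) ^ γ := Real.rpow_nonneg (sub_nonneg.2 htt) _
    have a4 := sub_nonneg.2 htt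
    calc _ ≤ |p * (g t' - g t)| + |q * (t' - t)| := abs_add_le _ _
      _ = |p| * |g t' - g t| + |q| * (t' - t) := by
        rw [abs_mul, abs_mul, abs_of_nonneg a4]
      _ ≤ (Ps * A) * (L * (t' - t) ^ γ) + (Pb * A) * (t' - t) ^ γ := by gcongr
      _ ≤ P * A * (t' - t) ^ γ := by
        have : 0 ≤ A * (t' - t) ^ γ := by positivity
        rw [hP]; nlinarith
  have F1 : ∀ s ∈ Icc 0 T, ∀ t ∈ Icc 0 T, ∀ t' ∈ Icc 0 T, ∀ x, t ≤ t' → t' - t ≤ 1 →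
      |F s x t t'| ≤ P * (1 + |x|) * (t' - t) ^ γ := by
    intro s hs t ht t' ht' x htt h1
    exact gen _ _ 0 t t' _ ht ht' htt h1 (by positivity) (grow σ S hS hσ s hs x)
      (grow b B hB hb s hs x)
  have F2 : ∀ s ∈ Icc 0 T, ∀ s' ∈ Icc 0 T, ∀ t ∈ Icc 0 T, ∀ t' ∈ Icc 0 T, ∀ x x', t ≤ t' →
      t' - t ≤ 1 → |F s' x' t t' - F s x t t'| ≤ P * (|s' - s| + |x' - x|) * (t' - t) ^ γ := by
    intro s hs s' hs' t ht t' ht' x x' htt h1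
    have e : F s' x' t t' - F s x t t' =
        (σ s' x' - σ s x) * (g t' - g t) + (b s' x' - b s x) * (t' - t) := by
      simp only [F]; ring
    rw [e]
    have h0 : 0 ≤ |s' - s| + |x' - x| := by positivity
    exact gen _ _ 0 t t' _ ht ht' htt h1 h0
      ((hσ s x s' x').trans (mul_le_mul_of_nonneg_right hSP h0))
      ((hb s x s' x').trans (mul_le_mul_of_nonneg_right hBP h0))
  have F3 : ∀ s x t t' t'', F s x t t' + F s x t' t'' = F s x t t'' := by
    intro s x t t' t''
    simp only [F]; ring
  have Fc : Continuous fun p : ℝ × ℝ × ℝ × ℝ => F p.1 p.2.1 p.2.2.1 p.2.2.2 := by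
    have c1 : Continuous fun p : ℝ × ℝ × ℝ × ℝ => σ p.1 p.2.1 :=
      (lip_continuous hσ).comp (continuous_fst.prodMk (continuous_fst.comp continuous_snd))
    have c2 : Continuous fun p : ℝ × ℝ × ℝ × ℝ => b p.1 p.2.1 :=
      (lip_continuous hb).comp (continuous_fst.prodMk (continuous_fst.comp continuous_snd))
    have c3 : Continuous fun p : ℝ × ℝ × ℝ × ℝ => g p.2.2.2 - g p.2.2.1 := by fun_prop
    have c4 : Continuous fun p : ℝ × ℝ × ℝ × ℝ => p.2.2.2 - p.2.2.1 := by fun_prop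
    exact (c1.mul c3).add (c2.mul c4)
  obtain ⟨x, K, h, M, hK, hh0, hh1, hM, hx0, hxM, hx⟩ :=
    davie_exists F T γ P z hT hγ hγ1 hP1 Fc F1 F2 F3
  set D := P * (1 + M) + K + 2 * M * (h ^ γ)⁻¹ with hD
  have hP0 : 0 ≤ P := by linarith
  have hhγ : 0 < h ^ γ := Real.rpow_pos_of_pos hh0 _
  have hxD : HolD x D γ 0 T := by
    apply HolD.of_le
    intro s hs t ht hst
    have d0 := sub_nonneg.2 hst
    have dγ : 0 ≤ (t - s) ^ γ := Real.rpow_nonneg d0 _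
    rcases lt_or_ge (t - s) h with hl | hl
    · have a := hx s hs t ht hst hl
      have f1 := F1 s hs s hs t ht (x s) hst (hl.le.trans hh1)
      have m := hxM s hs
      have f2 : P * (1 + |x s|) * (t - s) ^ γ ≤ P * (1 + M) * (t - s) ^ γ := by gcongr
      have r := rpow_split (p := γ) (q := γ) d0 (hl.le.trans hh1) hγ0.le hγ0.le
      rw [Real.one_rpow, one_mul] at r
      have r2 := mul_le_mul_of_nonneg_left r hK
      have tri : |x t - x s| ≤ |x t - x s - F s (x s) s t| + |F s (x s) s t| := by
        have := abs_add_le (x t - x s - F s (x s) s t) (F s (x s) s t)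
        simpa using this
      have : 0 ≤ 2 * M * (h ^ γ)⁻¹ * (t - s) ^ γ := by positivity
      rw [hD, add_mul, add_mul]
      linarith
    · have m1 := hxM s hs
      have m2 := hxM t ht
      have tri : |x t - x s| ≤ |x t| + |x s| := abs_sub _ _
      have r := Real.rpow_le_rpow hh0.le hl hγ0.le
      have r2 : 1 ≤ (h ^ γ)⁻¹ * (t - s) ^ γ := by
        rw [inv_mul_eq_div, one_le_div hhγ]; exact r
      have r3 := mul_le_mul_of_nonneg_left r2 (by positivity : 0 ≤ 2 * M)
      have : 0 ≤ (P * (1 + M) + K) * (t - s) ^ γ := by positivity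
      rw [hD, add_mul]
      linarith
  have hD0 : 0 ≤ D := by positivity
  refine ⟨x, D, hxD, ?_⟩
  have hbx := HolD.comp_lip hB hγ0.le hγ1 hb hxD
  set E := B * (T ^ (1 - γ) + D) with hE
  have hE0 : 0 ≤ E := by positivity
  have hco := hbx.continuousOn hγ0
  intro t ht
  have h0mem : (0 : ℝ) ∈ Icc 0 T := ⟨le_rfl, hT.le⟩
  refine ⟨(x t - ∫ τ in (0 : ℝ)..t, b τ (x τ)) - (x 0 - ∫ τ in (0 : ℝ)..0, b τ (x τ)), ?_, ?_⟩
  · refine rs_of_davie (fun τ => σ τ (x τ)) g (fun r => x r - ∫ τ in (0 : ℝ)..r, b τ (x τ))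
      t (K + E) (γ + γ) h ht.1 (by linarith) (by positivity) hh0 ?_
    intro s hs r hr hsr hl
    have hs' : s ∈ Icc 0 T := ⟨hs.1, hs.2.trans ht.2⟩
    have hr' : r ∈ Icc 0 T := ⟨hr.1, hr.2.trans ht.2⟩
    have d0 := sub_nonneg.2 hsr
    have a := hx s hs' r hr' hsr hl
    have hint : (∫ τ in (0 : ℝ)..r, b τ (x τ)) - (∫ τ in (0 : ℝ)..s, b τ (x τ)) =
        ∫ τ in s..r, b τ (x τ) :=
      intervalIntegral.integral_interval_sub_left
        (intble_of_contOn hco h0mem hr') (intble_of_contOn hco h0mem hs')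
    have hint2 : (∫ τ in s..r, (b τ (x τ) - b s (x s))) =
        (∫ τ in s..r, b τ (x τ)) - b s (x s) * (r - s) := by
      rw [intervalIntegral.integral_sub (intble_of_contOn hco hs' hr') (by simp)]
      simp [mul_comm]
    have bd : |∫ τ in s..r, (b τ (x τ) - b s (x s))| ≤ E * (r - s) ^ γ * (r - s) := by
      apply integral_bound hsr
      intro p hp
      have := hbx s hs' p ⟨hs'.1.trans hp.1, hp.2.trans hr'.2⟩
      refine this.trans ?_
      have hp0 := sub_nonneg.2 hp.1
      rw [abs_of_nonneg hp0]
      have := Real.rpow_le_rpow hp0 (sub_le_sub_right hp.2 s) hγ0.le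
      gcongr
    have sm := small (r - s) d0 (hl.le.trans hh1)
    have bd2 : E * (r - s) ^ γ * (r - s) ≤ E * (r - s) ^ (γ + γ) := by
      rw [Real.rpow_add_of_nonneg d0 hγ0.le hγ0.le, mul_assoc]
      have := Real.rpow_nonneg d0 γ
      gcongr
    have e : x r - (∫ τ in (0 : ℝ)..r, b τ (x τ)) - (x s - ∫ τ in (0 : ℝ)..s, b τ (x τ)) -
        σ s (x s) * (g r - g s) = (x r - x s - F s (x s) s r) -
          ∫ τ in s..r, (b τ (x τ) - b s (x s)) := by
      rw [hint2, ← hint]; simp only [F]; ring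
    rw [e]
    have := abs_sub (x r - x s - F s (x s) s r) (∫ τ in s..r, (b τ (x τ) - b s (x s)))
    rw [add_mul]
    linarith
  · rw [hx0, intervalIntegral.integral_same]; ring


/-- Existence and uniqueness, with probability 1, of solutions in `C^β([0,T])`
of the pathwise SDE driven by fractional Brownian motion. -/
theorem fbm_sde_existence_uniqueness
    {Ω : Type*} [MeasurableSpace Ω] (P : Measure Ω) [IsProbabilityMeasure P]
    (ξ : ℝ → Ω → ℝ) (b σ σt σx : ℝ → ℝ → ℝ) (Z : Ω → ℝ) (α C β T : ℝ)
    (hα : 0 < α) (hα1 : α < 1) (hC : 0 < C)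
    (hβ : (1 - α) / 2 < β) (hβ1 : β < (1 + α) / 2) (hT : 0 < T)
    (hfbm : IsFBM P ξ α C)
    (hcont : ∀ ω, Continuous fun t => ξ t ω)
    (hb : ∃ B : ℝ, ∀ t₁ x₁ t₂ x₂ : ℝ,
      |b t₂ x₂ - b t₁ x₁| ≤ B * (|t₂ - t₁| + |x₂ - x₁|))
    (hσdt : ∀ t x : ℝ, HasDerivAt (fun u => σ u x) (σt t x) t)
    (hσdx : ∀ t x : ℝ, HasDerivAt (fun y => σ t y) (σx t x) x)
    (hσtc : Continuous fun p : ℝ × ℝ => σt p.1 p.2)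
    (hσxc : Continuous fun p : ℝ × ℝ => σx p.1 p.2)
    (hσ : ∃ S : ℝ, ∀ t₁ x₁ t₂ x₂ : ℝ,
      |σ t₂ x₂ - σ t₁ x₁| ≤ S * (|t₂ - t₁| + |x₂ - x₁|) ∧
      |σt t₂ x₂ - σt t₁ x₁| ≤ S * (|t₂ - t₁| + |x₂ - x₁|) ∧
      |σx t₂ x₂ - σx t₁ x₁| ≤ S * (|t₂ - t₁| + |x₂ - x₁|)) :
    ∀ᵐ ω ∂P,
      (∃ x : ℝ → ℝ, IsPathwiseSolution b σ ξ Z T β ω x) ∧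
      (∀ x y : ℝ → ℝ, IsPathwiseSolution b σ ξ Z T β ω x →
        IsPathwiseSolution b σ ξ Z T β ω y → EqOn x y (Icc 0 T)) := by
  obtain ⟨B, hB⟩ := hb
  obtain ⟨S, hS⟩ := hσ
  have hSσ : ∀ t₁ x₁ t₂ x₂ : ℝ, |σ t₂ x₂ - σ t₁ x₁| ≤ S * (|t₂ - t₁| + |x₂ - x₁|) :=
    fun a c d e => (hS a c d e).1
  have hSx : ∀ t₁ x₁ t₂ x₂ : ℝ, |σx t₂ x₂ - σx t₁ x₁| ≤ S * (|t₂ - t₁| + |x₂ - x₁|) :=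
    fun a c d e => (hS a c d e).2.2
  obtain ⟨γ, hγl, hγu⟩ : ∃ γ, max (1 / 2) (max (1 - β) β) < γ ∧ γ < (1 + α) / 2 :=
    exists_between (max_lt (by linarith) (max_lt (by linarith) hβ1))
  have g1 : 1 / 2 < γ := (le_max_left _ _).trans_lt hγl
  have g2 : 1 - β < γ := ((le_max_left _ _).trans (le_max_right _ _)).trans_lt hγl
  have g3 : β < γ := ((le_max_right _ _).trans (le_max_right _ _)).trans_lt hγl
  have hβ0 : 0 < β := by linarith
  have g4 : γ ≤ 1 := by linarith
  filter_upwards [fbm_holder P ξ α C T γ hα hC hT hfbm hcont (by linarith) hγu] with ω hω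
  obtain ⟨L, hL, hg⟩ := hω
  have hgH : HolD (fun τ => ξ τ ω) L γ 0 T := hg
  constructor
  · obtain ⟨x, D, hxD, hsol⟩ := det_exists b σ (fun τ => ξ τ ω) (Z ω) T γ B S L hT g1 g4 hL
      hB hSσ (hcont ω) hgH
    refine ⟨x, ⟨D * T ^ (γ - β), ?_⟩, hsol⟩
    intro s hs t ht
    have hD0 : 0 ≤ D := by
      have := (abs_nonneg _).trans (hxD 0 ⟨le_rfl, hT.le⟩ T ⟨hT.le, le_rfl⟩)
      rw [sub_zero, abs_of_pos hT] at this
      exact nonneg_of_mul_nonneg_left this (by positivity)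
    have hd : |t - s| ≤ T := by
      rw [abs_le]; constructor <;> linarith [hs.1, hs.2, ht.1, ht.2]
    have r := rpow_split (p := γ - β) (q := β) (abs_nonneg (t - s)) hd (by linarith) hβ0.le
    rw [sub_add_cancel] at r
    calc _ ≤ D * |t - s| ^ γ := hxD s hs t ht
      _ ≤ D * (T ^ (γ - β) * |t - s| ^ β) := mul_le_mul_of_nonneg_left r hD0
      _ = _ := by ring
  · rintro x y ⟨⟨Cx, hCx⟩, hx⟩ ⟨⟨Cy, hCy⟩, hy⟩
    obtain ⟨D₁, hD₁, h1⟩ := bootstrap b σ (fun τ => ξ τ ω) x (Z ω) T β γ B S L Cx hT hβ0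
      (by linarith) (by linarith) g4 (by linarith) hL hB hSσ hgH hCx hx
    obtain ⟨D₂, hD₂, h2⟩ := bootstrap b σ (fun τ => ξ τ ω) y (Z ω) T β γ B S L Cy hT hβ0
      (by linarith) (by linarith) g4 (by linarith) hL hB hSσ hgH hCy hy
    refine det_unique b σ σx (fun τ => ξ τ ω) x y (Z ω) T γ B S L (D₁ + D₂) hT g1 g4 hL
      (by positivity) hB hσdx hSσ hSx hgH ?_ ?_ hx hy
    · intro s hs t ht
      refine (h1 s hs t ht).trans ?_
      gcongr; linarith
    · intro s hs t ht
      refine (h2 s hs t ht).trans ?_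
      gcongr; linarith
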